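/- Let a ∈ (0,1) and let (f,p) be a solution of problem (P) on (0,T) with initial datum f_I satisfying conditions (i)–(iii), such that f(·,t) is integrable on [−1,1] for each t. Then the buyer and vendor masses are conserved: for all t ∈ (0,T), ∫_{−1}^{p(t)} f(x,t) dx = ∫_{−1}^{p_I} f_I(x) dx and ∫_{p(t)}^{1} f(x,t) dx = ∫_{p_I}^{1} f_I(x) dx. -/

import Mathlib

open MeasureTheory

/-- The 1D heat kernel `K(x,t) = (4πt)^{-1/2} exp(-x²/(4t))`. -/
noncomputable def heatK (x t : ℝ) : ℝ :=
  (Real.sqrt (4 * Real.pi * t))⁻¹ * Real.exp (-(x ^ 2) / (4 * t))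

/-- The Neumann heat kernel on `[-1,1]`:
`Γ(x,x';t) = Σ_{k∈ℤ} K(x − (2k + (−1)^{|k|} x'), t)`. -/
noncomputable def heatGamma (x x' t : ℝ) : ℝ :=
  ∑' k : ℤ, heatK (x - (2 * (k : ℝ) + (-1 : ℝ) ^ k.natAbs * x')) t

/-- The flux `λ(s) = −∂ₓ f(p(s), s)` at the free boundary. -/
noncomputable def flux (f : ℝ → ℝ → ℝ) (p : ℝ → ℝ) (s : ℝ) : ℝ :=
  -deriv (fun x => f x s) (p s)

/-- `ā(s) = min {a, 1 − p(s), 1 + p(s)}`. -/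
noncomputable def abar (a : ℝ) (p : ℝ → ℝ) (s : ℝ) : ℝ :=
  min a (min (1 - p s) (1 + p s))

/-- The sup norm `‖h‖_{L^∞(−1,1)}` (for continuous `h`). -/
noncomputable def supNorm (h : ℝ → ℝ) : ℝ := ⨆ x : Set.Icc (-1:ℝ) 1, |h x.1|

/-- Conditions (i)–(iii) on the initial datum `f_I ∈ C²([−1,1])`:
(i) unique zero `p_I ∈ (−1,1)`, positive to the left, negative to the right;
(ii) Neumann conditions `∂ₓf_I(±1) = 0`;
(iii) `λ_I = −∂ₓ f_I(p_I) > 0` and `−∂ₓ f_I > λ_I/2` on `(p_I − a₀, p_I + a₀)`. -/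
structure IsInitialDatum (fI : ℝ → ℝ) (pI a₀ lamI : ℝ) : Prop where
  smooth : ContDiffOn ℝ 2 fI (Set.Icc (-1) 1)
  pI_mem : pI ∈ Set.Ioo (-1 : ℝ) 1
  zero_at : fI pI = 0
  pos_left : ∀ x ∈ Set.Ico (-1 : ℝ) pI, 0 < fI x
  neg_right : ∀ x ∈ Set.Ioc pI 1, fI x < 0
  neumann_left : derivWithin fI (Set.Icc (-1) 1) (-1) = 0
  neumann_right : derivWithin fI (Set.Icc (-1) 1) 1 = 0
  lamI_eq : lamI = -deriv fI pI
  lamI_pos : 0 < lamI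
  slope : ∀ x ∈ Set.Ioo (pI - a₀) (pI + a₀), lamI / 2 < -deriv fI x

/-- A solution `(f, p)` of problem (P) on the time set `J` with parameter `a` and
initial datum `f_I`: `p` is a continuous curve in `(−1,1)`, `p(t)` is the unique zero
of `f(·,t)` (positive to the left, negative to the right), `f(·,t)` is differentiable
at `p(t)`, the flux is locally integrable on `J`, and the Duhamel identity holds. -/
structure IsSolutionP (a : ℝ) (fI : ℝ → ℝ) (J : Set ℝ) (f : ℝ → ℝ → ℝ) (p : ℝ → ℝ) : Prop where
  p_cont : ContinuousOn p J
  p_mem : ∀ t ∈ J, p t ∈ Set.Ioo (-1 : ℝ) 1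
  zero_at : ∀ t ∈ J, f (p t) t = 0
  pos_left : ∀ t ∈ J, ∀ x ∈ Set.Ico (-1 : ℝ) (p t), 0 < f x t
  neg_right : ∀ t ∈ J, ∀ x ∈ Set.Ioc (p t) 1, f x t < 0
  diff_at : ∀ t ∈ J, DifferentiableAt ℝ (fun x => f x t) (p t)
  flux_loc_int : LocallyIntegrableOn (flux f p) J
  duhamel : ∀ t ∈ J, ∀ x ∈ Set.Icc (-1 : ℝ) 1,
      f x t = (∫ x' in (-1 : ℝ)..1, heatGamma x x' t * fI x')
        + ∫ s in (0 : ℝ)..t,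
            (heatGamma x (p s - abar a p s) (t - s)
              - heatGamma x (p s + abar a p s) (t - s)) * flux f p s

/-- The Duhamel iterate with data `(p_n, λ_n)` and initial datum `f_I`. -/
noncomputable def duhamelIterate (a : ℝ) (fI pn lamn : ℝ → ℝ) (x t : ℝ) : ℝ :=
  (∫ x' in (-1 : ℝ)..1, heatGamma x x' t * fI x')
    + ∫ s in (0 : ℝ)..t,
        (heatGamma x (pn s - a) (t - s) - heatGamma x (pn s + a) (t - s)) * lamn s

section helpers
open Set Filter Topology

noncomputable def kk (n : ℕ) : ℝ := ((n : ℝ) + 1) * Real.pi / 2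
noncomputable def ee (n : ℕ) (τ : ℝ) : ℝ := Real.exp (-(kk n) ^ 2 * τ)
noncomputable def th (a τ : ℝ) : ℝ := 1 / 4 + ∑' n : ℕ, ee n τ * Real.cos (kk n * a) / 2
noncomputable def dth (a τ : ℝ) : ℝ := ∑' n : ℕ, -(kk n * ee n τ * Real.sin (kk n * a) / 2)
noncomputable def Th (a τ : ℝ) : ℝ := a / 4 + ∑' n : ℕ, ee n τ * Real.sin (kk n * a) / (2 * kk n)

theorem kk_ge (n : ℕ) : (1 : ℝ) ≤ kk n := by
  unfold kk
  have := Real.pi_gt_three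
  have h : (0 : ℝ) ≤ n := Nat.cast_nonneg n
  nlinarith

theorem kk_ge' (n : ℕ) : (n : ℝ) + 1 ≤ kk n := by
  unfold kk
  have := Real.pi_gt_three
  have h : (0 : ℝ) ≤ n := Nat.cast_nonneg n
  nlinarith

theorem ee_pos (n : ℕ) (τ : ℝ) : 0 < ee n τ := Real.exp_pos _

theorem ee_anti (n : ℕ) {δ τ : ℝ} (h : δ ≤ τ) : ee n τ ≤ ee n δ := by
  unfold ee
  apply Real.exp_le_exp.2
  nlinarith [sq_nonneg (kk n)]

theorem summable_exp_kk : Summable (fun n : ℕ => Real.exp (-(kk n))) := by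
  have h : Summable (fun n : ℕ => Real.exp (-((n : ℕ) : ℝ))) := Real.summable_exp_neg_nat
  refine Summable.of_nonneg_of_le (fun n => (Real.exp_pos _).le) (fun n => ?_) h
  apply Real.exp_le_exp.2
  have := kk_ge' n
  linarith

theorem summable_master (j : ℕ) {δ : ℝ} (hδ : 0 < δ) :
    Summable (fun n : ℕ => (kk n) ^ j * Real.exp (kk n) * ee n δ) := by
  have h := summable_exp_kk.mul_left ((j.factorial : ℝ) * Real.exp (9 / (4 * δ)))
  refine Summable.of_nonneg_of_le (fun n => ?_) (fun n => ?_) h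
  · have := kk_ge n
    have := ee_pos n δ
    positivity
  · have hk := kk_ge n
    have h1 : (kk n) ^ j ≤ j.factorial * Real.exp (kk n) := by
      have := Real.pow_div_factorial_le_exp (kk n) (by linarith) j
      rw [div_le_iff₀ (by positivity)] at this
      linarith
    calc (kk n) ^ j * Real.exp (kk n) * ee n δ
        ≤ (j.factorial * Real.exp (kk n)) * Real.exp (kk n) * ee n δ := by
          have := ee_pos n δ
          gcongr
      _ = j.factorial * Real.exp (kk n + kk n + -(kk n) ^ 2 * δ) := by
          unfold ee; rw [Real.exp_add, Real.exp_add]; ring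
      _ ≤ j.factorial * Real.exp (9 / (4 * δ) + -(kk n)) := by
          refine mul_le_mul_of_nonneg_left (Real.exp_le_exp.2 ?_) (by positivity)
          have : 9 / (4 * δ) - 3 * kk n + (kk n) ^ 2 * δ = (3 - 2 * δ * kk n) ^ 2 / (4 * δ) := by
            field_simp; ring
          have h2 : 0 ≤ (3 - 2 * δ * kk n) ^ 2 / (4 * δ) := by positivity
          linarith
      _ = _ := by rw [Real.exp_add]; ring

theorem summable_kk (j : ℕ) {δ : ℝ} (hδ : 0 < δ) :
    Summable (fun n : ℕ => (kk n) ^ j * ee n δ) := by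
  refine Summable.of_nonneg_of_le (fun n => ?_) (fun n => ?_) (summable_master j hδ)
  · have := kk_ge n
    have := ee_pos n δ
    positivity
  · have hk := kk_ge n
    have := ee_pos n δ
    have h1 : 1 ≤ Real.exp (kk n) := Real.one_le_exp (by linarith)
    have h2 : (0:ℝ) ≤ kk n ^ j := by positivity
    nlinarith [mul_nonneg h2 this.le]

theorem th_bd (n : ℕ) (a : ℝ) {δ τ : ℝ} (h : δ ≤ τ) :
    ‖ee n τ * Real.cos (kk n * a) / 2‖ ≤ kk n ^ 1 * ee n δ := by
  rw [Real.norm_eq_abs, abs_div, abs_mul, abs_of_pos (ee_pos n τ)]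
  have h1 := Real.abs_cos_le_one (kk n * a)
  have h2 := ee_anti n h
  have h3 := kk_ge n
  have h4 := ee_pos n τ
  norm_num
  nlinarith [abs_nonneg (Real.cos (kk n * a))]

theorem dth_bd (n : ℕ) (a : ℝ) {δ τ : ℝ} (h : δ ≤ τ) :
    ‖-(kk n * ee n τ * Real.sin (kk n * a) / 2)‖ ≤ kk n ^ 1 * ee n δ := by
  have h3 := kk_ge n
  rw [norm_neg, Real.norm_eq_abs, abs_div, abs_mul, abs_mul, abs_of_pos (ee_pos n τ),
    abs_of_nonneg (by linarith : 0 ≤ kk n)]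
  have h1 := Real.abs_sin_le_one (kk n * a)
  have h2 := ee_anti n h
  have h4 := ee_pos n τ
  norm_num
  have h5 : kk n * ee n τ ≤ kk n * ee n δ := by gcongr
  have h6 : 0 ≤ kk n * ee n τ := by positivity
  nlinarith [abs_nonneg (Real.sin (kk n * a))]

theorem Th_bd (n : ℕ) (a : ℝ) {δ τ : ℝ} (h : δ ≤ τ) :
    ‖ee n τ * Real.sin (kk n * a) / (2 * kk n)‖ ≤ kk n ^ 1 * ee n δ := by
  have h3 := kk_ge n
  rw [Real.norm_eq_abs, abs_div, abs_mul, abs_of_pos (ee_pos n τ),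
    abs_of_nonneg (by linarith : 0 ≤ 2 * kk n), div_le_iff₀ (by linarith)]
  have h1 := Real.abs_sin_le_one (kk n * a)
  have h2 := ee_anti n h
  have h4 := ee_pos n τ
  have h6 : 1 ≤ 2 * (kk n * kk n) := by nlinarith
  calc ee n τ * |Real.sin (kk n * a)| ≤ ee n δ * 1 := by
        have := (h4.trans_le h2).le
        gcongr
    _ ≤ ee n δ * (2 * (kk n * kk n)) := by gcongr; exact (h4.trans_le h2).le
    _ = _ := by ring

theorem contOn_of_bd (F : ℕ → ℝ → ℝ → ℝ) (hF : ∀ n, Continuous (fun z : ℝ × ℝ => F n z.1 z.2))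
    (hb : ∀ n a (δ τ : ℝ), δ ≤ τ → ‖F n a τ‖ ≤ kk n ^ 1 * ee n δ) :
    ContinuousOn (fun z : ℝ × ℝ => ∑' n, F n z.1 z.2) {z | 0 < z.2} := by
  intro z hz
  have hz' : 0 < z.2 := hz
  have h : ContinuousOn (fun z : ℝ × ℝ => ∑' n, F n z.1 z.2) {w | z.2 / 2 < w.2} := by
    refine continuousOn_tsum (fun n => (hF n).continuousOn) (summable_kk 1 (half_pos hz')) ?_
    intro n w hw
    exact hb n _ _ _ (le_of_lt hw)
  refine (h.continuousAt ?_).continuousWithinAt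
  exact (isOpen_lt continuous_const continuous_snd).mem_nhds (by simp; linarith)

theorem ee_cont (n : ℕ) : Continuous (ee n) := by unfold ee; fun_prop

theorem th_contOn : ContinuousOn (fun z : ℝ × ℝ => th z.1 z.2) {z | 0 < z.2} := by
  unfold th
  refine continuousOn_const.add (contOn_of_bd (fun n a τ => ee n τ * Real.cos (kk n * a) / 2)
    (fun n => ?_) (fun n a δ τ h => th_bd n a h))
  have := ee_cont n
  fun_prop

theorem dth_contOn : ContinuousOn (fun z : ℝ × ℝ => dth z.1 z.2) {z | 0 < z.2} := by
  unfold dth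
  refine (contOn_of_bd (fun n a τ => -(kk n * ee n τ * Real.sin (kk n * a) / 2))
    (fun n => ?_) (fun n a δ τ h => dth_bd n a h))
  have := ee_cont n
  fun_prop

theorem Th_contOn : ContinuousOn (fun z : ℝ × ℝ => Th z.1 z.2) {z | 0 < z.2} := by
  unfold Th
  refine (by fun_prop : Continuous (fun z : ℝ × ℝ => z.1 / 4)).continuousOn.add
    (contOn_of_bd (fun n a τ => ee n τ * Real.sin (kk n * a) / (2 * kk n))
    (fun n => ?_) (fun n a δ τ h => Th_bd n a h))
  have := ee_cont n
  fun_prop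

theorem th_hasDerivAt (a : ℝ) {τ : ℝ} (hτ : 0 < τ) :
    HasDerivAt (fun a => th a τ) (dth a τ) a := by
  unfold th dth
  refine HasDerivAt.const_add _ ?_
  refine hasDerivAt_tsum (summable_kk 1 hτ) (fun n y => ?_) (fun n y => dth_bd n y le_rfl)
    (y₀ := 0) ?_ a
  · have h := ((((hasDerivAt_id y).const_mul (kk n)).cos).const_mul (ee n τ)).div_const 2
    refine h.congr_deriv ?_
    simp; ring
  · exact Summable.of_norm_bounded (summable_kk 1 hτ) (fun n => th_bd n 0 le_rfl)

theorem Th_hasDerivAt (a : ℝ) {τ : ℝ} (hτ : 0 < τ) :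
    HasDerivAt (fun a => Th a τ) (th a τ) a := by
  unfold th Th
  refine HasDerivAt.add ?_ ?_
  · exact ((hasDerivAt_id a).div_const 4)
  refine hasDerivAt_tsum (summable_kk 1 hτ) (fun n y => ?_) (fun n y => th_bd n y le_rfl)
    (y₀ := 0) ?_ a
  · have h := ((((hasDerivAt_id y).const_mul (kk n)).sin).const_mul (ee n τ)).div_const (2 * kk n)
    refine h.congr_deriv ?_
    have := kk_ge n
    have h0 : kk n ≠ 0 := by positivity
    simp; field_simp
  · exact Summable.of_norm_bounded (summable_kk 1 hτ) (fun n => Th_bd n 0 le_rfl)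

theorem Th_hasDerivAt_t (a : ℝ) {τ : ℝ} (hτ : 0 < τ) :
    HasDerivAt (fun τ => Th a τ) (dth a τ) τ := by
  unfold dth Th
  refine HasDerivAt.const_add _ ?_
  refine hasDerivAt_tsum_of_isPreconnected (t := Ioi (τ / 2)) (summable_kk 1 (half_pos hτ))
    isOpen_Ioi isPreconnected_Ioi (fun n y hy => ?_) (fun n y hy => dth_bd n a (le_of_lt hy))
    (y₀ := τ) (by simp; linarith) ?_ (by simp; linarith)
  · have h1 : HasDerivAt (ee n) (ee n y * (-(kk n) ^ 2)) y := by
      unfold ee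
      have := ((hasDerivAt_id y).const_mul (-(kk n) ^ 2)).exp
      simpa using this
    have h := (h1.mul_const (Real.sin (kk n * a))).div_const (2 * kk n)
    refine h.congr_deriv ?_
    have := kk_ge n
    have h0 : kk n ≠ 0 := by positivity
    field_simp
  · exact Summable.of_norm_bounded (summable_kk 1 hτ) (fun n => Th_bd n a le_rfl)

theorem th_neg (a τ : ℝ) : th (-a) τ = th a τ := by
  unfold th; simp
theorem dth_neg (a τ : ℝ) : dth (-a) τ = -dth a τ := by
  unfold dth; rw [← tsum_neg]; simp [neg_div]
theorem Th_neg (a τ : ℝ) : Th (-a) τ = -Th a τ := by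
  unfold Th; rw [neg_add, ← tsum_neg]; simp [neg_div]

theorem kk_four (n : ℕ) (a : ℝ) : kk n * (a + 4) = kk n * a + (n + 1 : ℕ) * (2 * Real.pi) := by
  unfold kk; push_cast; ring

theorem th_add_four (a τ : ℝ) : th (a + 4) τ = th a τ := by
  unfold th; simp_rw [kk_four, Real.cos_add_nat_mul_two_pi]
theorem dth_add_four (a τ : ℝ) : dth (a + 4) τ = dth a τ := by
  unfold dth; simp_rw [kk_four, Real.sin_add_nat_mul_two_pi]
theorem Th_add_four (a τ : ℝ) : Th (a + 4) τ = Th a τ + 1 := by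
  unfold Th; simp_rw [kk_four, Real.sin_add_nat_mul_two_pi]; ring

theorem Th_two (τ : ℝ) : Th 2 τ = 1 / 2 := by
  unfold Th
  have : ∀ n : ℕ, kk n * 2 = (n + 1 : ℕ) * Real.pi := fun n => by unfold kk; push_cast; ring
  simp_rw [this, Real.sin_nat_mul_pi]
  norm_num

open Set Filter Topology

theorem sqrt_quot {τ : ℝ} (hτ : 0 < τ) :
    (Real.sqrt (4 * Real.pi * τ))⁻¹ * (1 / (4 / (Real.pi * τ)) ^ (1 / 2 : ℝ)) = 1 / 4 := by
  have hp := Real.pi_pos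
  rw [← Real.sqrt_eq_rpow, one_div, ← mul_inv, ← Real.sqrt_mul (by positivity)]
  rw [show 4 * Real.pi * τ * (4 / (Real.pi * τ)) = 4 ^ 2 by field_simp]
  rw [Real.sqrt_sq (by norm_num)]; norm_num

theorem ee_eq (n : ℕ) (τ : ℝ) :
    ee n τ = Real.exp (-Real.pi * ((n : ℝ) + 1) ^ 2 * (1 / (4 / (Real.pi * τ)))) := by
  unfold ee kk; congr 1; rw [one_div_div]; ring

theorem th_hasSum (a : ℝ) {τ : ℝ} (hτ : 0 < τ) :
    HasSum (fun m : ℤ => heatK (a + 4 * m) τ) (th a τ) := by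
  have hp := Real.pi_pos
  have hX : 0 < 4 / (Real.pi * τ) := by positivity
  have h1 := HurwitzZeta.hasSum_int_evenKernel (a / 4) hX
  have h2 := HurwitzZeta.hasSum_nat_cosKernel₀ (a / 4) (one_div_pos.2 hX)
  have h3 := HurwitzZeta.evenKernel_functional_equation ((a / 4 : ℝ) : UnitAddCircle) (4 / (Real.pi * τ))
  have h4 : th a τ = 1 / 4 * HurwitzZeta.cosKernel ((a / 4 : ℝ) : UnitAddCircle) (1 / (4 / (Real.pi * τ))) := by
    have h5 : ∑' n : ℕ, ee n τ * Real.cos (kk n * a) / 2 =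
        1 / 4 * (HurwitzZeta.cosKernel ((a / 4 : ℝ) : UnitAddCircle) (1 / (4 / (Real.pi * τ))) - 1) := by
      rw [← h2.tsum_eq, ← tsum_mul_left]
      refine tsum_congr fun n => ?_
      rw [ee_eq, show kk n * a = 2 * Real.pi * (a / 4) * (n + 1) by unfold kk; ring]
      ring
    unfold th; rw [h5]; ring
  have h6 := h1.mul_left (Real.sqrt (4 * Real.pi * τ))⁻¹
  rw [h3, ← mul_assoc, sqrt_quot hτ, ← h4] at h6
  refine h6.congr_fun fun m => ?_
  unfold heatK
  congr 2
  field_simp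
  ring

theorem dth_hasSum (a : ℝ) {τ : ℝ} (hτ : 0 < τ) :
    HasSum (fun m : ℤ => -((a + 4 * m) / (2 * τ)) * heatK (a + 4 * m) τ) (dth a τ) := by
  have hp := Real.pi_pos
  have hX : 0 < 4 / (Real.pi * τ) := by positivity
  have h1 := HurwitzZeta.hasSum_int_oddKernel (a / 4) hX
  have h2 := HurwitzZeta.hasSum_nat_sinKernel (a / 4) (one_div_pos.2 hX)
  have h3 := HurwitzZeta.oddKernel_functional_equation ((a / 4 : ℝ) : UnitAddCircle) (4 / (Real.pi * τ))
  have h4 : dth a τ = -(Real.pi / 8) * HurwitzZeta.sinKernel ((a / 4 : ℝ) : UnitAddCircle) (1 / (4 / (Real.pi * τ))) := by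
    rw [← hasSum_nat_add_iff' 1] at h2
    simp only [Finset.sum_range_one, Nat.cast_zero, mul_zero, zero_mul, sub_zero] at h2
    unfold dth
    rw [← h2.tsum_eq, ← tsum_mul_left]
    refine tsum_congr fun n => ?_
    rw [ee_eq, show kk n * a = 2 * Real.pi * (a / 4) * (n + 1) by unfold kk; ring]
    unfold kk
    push_cast
    ring
  have hX3 : 1 / (4 / (Real.pi * τ)) ^ (3 / 2 : ℝ)
      = (Real.pi * τ / 4) * (1 / (4 / (Real.pi * τ)) ^ (1 / 2 : ℝ)) := by
    rw [show (3 / 2 : ℝ) = 1 + 1 / 2 by norm_num, Real.rpow_add hX, Real.rpow_one]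
    rw [← one_div_mul_one_div, one_div_div]
  have h6 := h1.mul_left (-(2 / τ) * (Real.sqrt (4 * Real.pi * τ))⁻¹)
  have h7 : -(2 / τ) * (Real.sqrt (4 * Real.pi * τ))⁻¹ *
      HurwitzZeta.oddKernel ((a / 4 : ℝ) : UnitAddCircle) (4 / (Real.pi * τ)) = dth a τ := by
    rw [h3, hX3, h4]
    have := sqrt_quot hτ
    calc _ = -(2 / τ) * (Real.pi * τ / 4) * ((Real.sqrt (4 * Real.pi * τ))⁻¹ * (1 / (4 / (Real.pi * τ)) ^ (1 / 2 : ℝ))) * HurwitzZeta.sinKernel ((a / 4 : ℝ) : UnitAddCircle) (1 / (4 / (Real.pi * τ))) := by ring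
      _ = _ := by rw [this]; field_simp; ring
  rw [h7] at h6
  refine h6.congr_fun fun m => ?_
  unfold heatK
  rw [show -((a + 4 * (m:ℝ)) ^ 2) / (4 * τ) = -Real.pi * (m + a / 4) ^ 2 * (4 / (Real.pi * τ)) by
    field_simp; ring]
  field_simp
  ring

theorem heatK_nonneg (z τ : ℝ) : 0 ≤ heatK z τ := by unfold heatK; positivity

theorem th_nonneg (a : ℝ) {τ : ℝ} (hτ : 0 < τ) : 0 ≤ th a τ :=
  (th_hasSum a hτ).nonneg (fun _ => heatK_nonneg _ _)

theorem heatK_small {z τ L : ℝ} (hL : 0 < L) (hz : L ≤ |z|) (hτ : 0 < τ) (h1 : τ ≤ 1) :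
    heatK z τ ≤ 384 * τ ^ 2 / z ^ 6 := by
  have hz0 : z ≠ 0 := by intro h; simp [h] at hz; linarith
  have hz2 : 0 < z ^ 2 := by positivity
  have hs : 0 < z ^ 2 / (4 * τ) := by positivity
  have he : Real.exp (-(z ^ 2) / (4 * τ)) ≤ 384 * τ ^ 3 / z ^ 6 := by
    have := Real.pow_div_factorial_le_exp (z ^ 2 / (4 * τ)) hs.le 3
    rw [neg_div, Real.exp_neg]
    rw [inv_le_comm₀ (Real.exp_pos _) (by positivity)]
    refine le_trans (le_of_eq ?_) this
    simp [Nat.factorial]; field_simp; norm_num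
  have hr : (Real.sqrt (4 * Real.pi * τ))⁻¹ ≤ τ⁻¹ := by
    apply inv_anti₀ hτ
    apply Real.le_sqrt_of_sq_le
    nlinarith [Real.pi_gt_three]
  unfold heatK
  calc _ ≤ τ⁻¹ * (384 * τ ^ 3 / z ^ 6) := by gcongr
    _ = _ := by field_simp

theorem summable_int_sq : Summable (fun m : ℤ => 1 / ((|m| : ℤ) + 1 : ℝ) ^ 2) := by
  have h : Summable (fun n : ℕ => 1 / ((n : ℝ) + 1) ^ 2) := by
    have := (summable_nat_add_iff 1).2 (Real.summable_one_div_nat_pow.2 (by norm_num : 1 < 2))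
    simpa using this
  refine Summable.of_nat_of_neg ?_ ?_ <;> simpa using h

theorem sep_low {ρ a : ℝ} (hρ : 0 < ρ) (hρ1 : ρ ≤ 1) (ha : a ∈ Icc ρ (4 - ρ)) (m : ℤ) :
    ρ / 2 * ((|m| : ℤ) + 1 : ℝ) ≤ |a + 4 * m| := by
  obtain ⟨h1, h2⟩ := ha
  rcases le_or_gt 0 m with hm | hm
  · rw [abs_of_nonneg hm]
    have : (0 : ℝ) ≤ m := by exact_mod_cast hm
    refine le_trans ?_ (le_abs_self _)
    nlinarith
  · rw [abs_of_neg hm]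
    have : (m : ℝ) ≤ -1 := by exact_mod_cast (by omega : m ≤ -1)
    refine le_trans ?_ (neg_le_abs _)
    push_cast
    nlinarith

theorem th_small {ρ : ℝ} (hρ : 0 < ρ) (hρ1 : ρ ≤ 1) : ∃ C, 0 ≤ C ∧ ∀ a ∈ Icc ρ (4 - ρ),
    ∀ τ, 0 < τ → τ ≤ 1 → |th a τ| ≤ C * τ ^ 2 ∧ |dth a τ| ≤ C * τ := by
  set S := ∑' m : ℤ, 1 / ((|m| : ℤ) + 1 : ℝ) ^ 2
  have hS : 0 ≤ S := tsum_nonneg fun m => by positivity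
  refine ⟨384 * (64 / ρ ^ 6) * S, by positivity, fun a ha τ hτ h1 => ?_⟩
  have key : ∀ m : ℤ, 1 / |a + 4 * m| ^ 5 ≤ (64 / ρ ^ 6) * (1 / ((|m| : ℤ) + 1 : ℝ) ^ 2) ∧
      1 / |a + 4 * m| ^ 6 ≤ (64 / ρ ^ 6) * (1 / ((|m| : ℤ) + 1 : ℝ) ^ 2) := by
    intro m
    have hl := sep_low hρ hρ1 ha m
    have hm : (1 : ℝ) ≤ (|m| : ℤ) + 1 := by
      have : (0 : ℝ) ≤ (|m| : ℤ) := by exact_mod_cast abs_nonneg m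
      linarith
    set N : ℝ := (|m| : ℤ) + 1
    have hN : 0 < N := by linarith
    have e5 : N ^ 2 ≤ N ^ 5 := pow_le_pow_right₀ hm (by norm_num)
    have e6 : N ^ 2 ≤ N ^ 6 := pow_le_pow_right₀ hm (by norm_num)
    constructor
    · calc 1 / |a + 4 * m| ^ 5 ≤ 1 / (ρ / 2 * N) ^ 5 := by gcongr
        _ = (32 / ρ ^ 5) * (1 / N ^ 5) := by field_simp; norm_num
        _ ≤ (64 / ρ ^ 6) * (1 / N ^ 2) := by
          have : ρ ^ 6 ≤ ρ ^ 5 := pow_le_pow_of_le_one hρ.le hρ1 (by norm_num)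
          gcongr
          norm_num
    · calc 1 / |a + 4 * m| ^ 6 ≤ 1 / (ρ / 2 * N) ^ 6 := by gcongr
        _ = (64 / ρ ^ 6) * (1 / N ^ 6) := by field_simp; norm_num
        _ ≤ (64 / ρ ^ 6) * (1 / N ^ 2) := by gcongr
  have hsum := summable_int_sq.hasSum
  have hpos : ∀ m : ℤ, 0 < |a + 4 * m| := fun m => by
    refine lt_of_lt_of_le ?_ (sep_low hρ hρ1 ha m)
    have : (0 : ℝ) ≤ (|m| : ℤ) := by exact_mod_cast abs_nonneg m
    positivity
  have hK : ∀ m : ℤ, heatK (a + 4 * m) τ ≤ 384 * τ ^ 2 * (1 / |a + 4 * m| ^ 6) := fun m => by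
    refine (heatK_small (hpos m) le_rfl hτ h1).trans (le_of_eq ?_)
    rw [show |a + 4 * (m:ℝ)| ^ 6 = (a + 4 * m) ^ 6 from Even.pow_abs (by decide) _]
    ring
  constructor
  · rw [abs_of_nonneg (th_nonneg a hτ)]
    refine hasSum_le (fun m => ?_) (th_hasSum a hτ) ((hsum.mul_left (384 * τ ^ 2 * (64 / ρ ^ 6))).congr_fun (fun _ => rfl)) |>.trans (le_of_eq ?_)
    · calc _ ≤ 384 * τ ^ 2 * (1 / |a + 4 * m| ^ 6) := hK m
        _ ≤ 384 * τ ^ 2 * ((64 / ρ ^ 6) * (1 / ((|m| : ℤ) + 1 : ℝ) ^ 2)) := by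
          gcongr ?_ * ?_; exact (key m).2
        _ = _ := by ring
    · ring
  · rw [← (dth_hasSum a hτ).tsum_eq, ← Real.norm_eq_abs]
    refine (tsum_of_norm_bounded (hsum.mul_left (384 * τ * (64 / ρ ^ 6))) (fun m => ?_)).trans (le_of_eq ?_)
    · rw [Real.norm_eq_abs, abs_mul, abs_neg, abs_div, abs_of_pos (by positivity : 0 < 2 * τ), abs_of_nonneg (heatK_nonneg _ _)]
      calc _ ≤ |a + 4 * m| / (2 * τ) * (384 * τ ^ 2 * (1 / |a + 4 * m| ^ 6)) := by
            gcongr; exact hK m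
        _ = 192 * τ * (1 / |a + 4 * m| ^ 5) := by
            have := (hpos m).ne'
            field_simp; norm_num
        _ ≤ 384 * τ * (1 / |a + 4 * m| ^ 5) := by
            gcongr; norm_num
        _ ≤ 384 * τ * ((64 / ρ ^ 6) * (1 / ((|m| : ℤ) + 1 : ℝ) ^ 2)) := by
            gcongr ?_ * ?_; exact (key m).1
        _ = _ := by ring
    · ring

theorem hasSum_parity (g : ℤ → ℝ) {A B : ℝ} (e1 : HasSum (fun m : ℤ => g (2 * m)) A)
    (e2 : HasSum (fun m : ℤ => g (2 * m + 1)) B) : HasSum g (A + B) := by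
  have i1 : Function.Injective (fun m : ℤ => 2 * m) := fun a b h => by simpa using h
  have i2 : Function.Injective (fun m : ℤ => 2 * m + 1) := fun a b h => by simpa using h
  have f1 : HasSum (g ∘ ((↑) : Set.range (fun m : ℤ => 2 * m) → ℤ)) A :=
    (i1.hasSum_range_iff (f := g)).2 e1
  have f2 : HasSum (g ∘ ((↑) : Set.range (fun m : ℤ => 2 * m + 1) → ℤ)) B :=
    (i2.hasSum_range_iff (f := g)).2 e2
  refine HasSum.add_isCompl ?_ f1 f2
  rw [isCompl_iff, Set.disjoint_iff_inter_eq_empty, codisjoint_iff]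
  constructor
  · ext k; simp
  · ext k; simp; rcases Int.even_or_odd' k with ⟨c, h | h⟩
    · left; exact ⟨c, by omega⟩
    · right; exact ⟨c, by omega⟩

theorem heatGamma_eq (x y : ℝ) {τ : ℝ} (hτ : 0 < τ) :
    heatGamma x y τ = th (x - y) τ + th (x + y + 2) τ := by
  have h1 := th_hasSum (-(x - y)) hτ
  have h2 := th_hasSum (-(x + y + 2)) hτ
  rw [th_neg] at h1 h2
  have hn : ∀ z, heatK (-z) τ = heatK z τ := fun z => by unfold heatK; simp
  unfold heatGamma
  refine HasSum.tsum_eq (hasSum_parity _ ?_ ?_)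
  · refine h1.congr_fun fun m => ?_
    rw [Even.neg_one_pow (by simp), ← hn]
    congr 1; push_cast; ring
  · have h3 := (Equiv.addRight (1 : ℤ)).hasSum_iff.2 h2
    refine h3.congr_fun fun m => ?_
    have ho : Odd (2 * m + 1).natAbs := by
      rw [Int.natAbs_odd]; exact odd_two_mul_add_one m
    rw [Odd.neg_one_pow ho, ← hn]
    simp only [Function.comp, Equiv.coe_addRight]
    congr 1; push_cast; ring

open Set Filter Topology

noncomputable def th0 (a τ : ℝ) : ℝ := if 0 < τ then th a τ else 0
noncomputable def g0 (a τ : ℝ) : ℝ := if 0 < τ then dth a τ else 0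
noncomputable def st (a : ℝ) : ℝ := if 0 < a then 1 / 2 else -1 / 2
noncomputable def Th0 (a τ : ℝ) : ℝ := if 0 < τ then Th a τ else st a

def Om : Set (ℝ × ℝ) := {z | 0 < z.2 ∨ (0 < |z.1| ∧ |z.1| < 4)}

def KC (ρ δ T : ℝ) : Set (ℝ × ℝ) :=
  {z | |z.1| ≤ 4 ∧ |z.2| ≤ T ∧ (δ ≤ z.2 ∨ (ρ ≤ |z.1| ∧ |z.1| ≤ 4 - ρ))}

theorem meas_of_contOn {F : ℝ × ℝ → ℝ} {G : ℝ × ℝ → ℝ} (hF : ContinuousOn F {z | 0 < z.2})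
    (hG : Measurable G) : Measurable (fun z : ℝ × ℝ => if 0 < z.2 then F z else G z) := by
  classical
  have hs : MeasurableSet {z : ℝ × ℝ | 0 < z.2} := measurableSet_lt measurable_const measurable_snd
  refine measurable_of_restrict_of_restrict_compl hs ?_ ?_
  · have : (({z : ℝ × ℝ | 0 < z.2}).domRestrict fun z : ℝ × ℝ => if 0 < z.2 then F z else G z)
        = ({z : ℝ × ℝ | 0 < z.2}).domRestrict F := by
      ext z; have : 0 < z.1.2 := z.2
      simp [this]
    rw [this]
    exact (continuousOn_iff_continuous_restrict.1 hF).measurable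
  · have : (({z : ℝ × ℝ | 0 < z.2}ᶜ).domRestrict fun z : ℝ × ℝ => if 0 < z.2 then F z else G z)
        = ({z : ℝ × ℝ | 0 < z.2}ᶜ).domRestrict G := by
      ext z; have : ¬ 0 < z.1.2 := z.2
      simp [this]
    rw [this]
    exact hG.comp measurable_subtype_coe

theorem th0_meas : Measurable (fun z : ℝ × ℝ => th0 z.1 z.2) :=
  meas_of_contOn th_contOn measurable_const
theorem g0_meas : Measurable (fun z : ℝ × ℝ => g0 z.1 z.2) :=
  meas_of_contOn dth_contOn measurable_const
theorem Th0_meas : Measurable (fun z : ℝ × ℝ => Th0 z.1 z.2) := by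
  refine meas_of_contOn Th_contOn (G := fun z => st z.1) ?_
  unfold st
  exact Measurable.ite (measurableSet_lt measurable_const measurable_fst) measurable_const
    measurable_const

theorem th0_hasDerivAt (a τ : ℝ) : HasDerivAt (fun a => th0 a τ) (g0 a τ) a := by
  unfold th0 g0
  by_cases h : 0 < τ
  · simp only [h, if_true]; exact th_hasDerivAt a h
  · simp only [h, if_false]; exact hasDerivAt_const a 0

theorem th0_nonneg (a τ : ℝ) : 0 ≤ th0 a τ := by
  unfold th0; split_ifs with h
  · exact th_nonneg a h
  · exact le_rfl

theorem Th_mono {τ : ℝ} (hτ : 0 < τ) : Monotone (fun a => Th a τ) :=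
  monotone_of_hasDerivAt_nonneg (fun a => Th_hasDerivAt a hτ) (fun a => th_nonneg a hτ)

theorem Th_zero (τ : ℝ) : Th 0 τ = 0 := by unfold Th; simp

theorem Th0_bd (a τ : ℝ) (ha : |a| ≤ 4) : |Th0 a τ| ≤ 1 := by
  unfold Th0
  split_ifs with h
  · have h4 : Th 4 τ = 1 := by
      have := Th_add_four 0 τ
      rw [Th_zero] at this; simpa using this
    have h4' : Th (-4) τ = -1 := by rw [Th_neg, h4]
    obtain ⟨h1, h2⟩ := abs_le.1 ha
    have e1 := Th_mono h h1
    have e2 := Th_mono h h2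
    simp only at e1 e2
    rw [abs_le]; constructor <;> linarith
  · unfold st; split_ifs <;> norm_num [abs_le]

theorem small0 {ρ : ℝ} (hρ : 0 < ρ) (hρ1 : ρ ≤ 1) : ∃ C, 0 ≤ C ∧ ∀ a, ρ ≤ |a| → |a| ≤ 4 - ρ →
    ∀ τ ≤ 1, |th0 a τ| ≤ C * |τ| ∧ |g0 a τ| ≤ C * |τ| ∧ |Th0 a τ - st a| ≤ C * τ ^ 2 := by
  obtain ⟨C, hC, h⟩ := th_small hρ hρ1
  have hT : ∀ a ∈ Icc ρ (4 - ρ), ∀ τ, 0 < τ → τ ≤ 1 → |Th a τ - 1 / 2| ≤ (C * τ ^ 2) * 2 := by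
    intro a ha τ h0 h1
    have := (convex_Icc ρ (4 - ρ)).norm_image_sub_le_of_norm_hasDerivWithin_le
      (f := fun a => Th a τ) (f' := fun a => th a τ) (C := C * τ ^ 2) (x := 2) (y := a)
      (fun x hx => (Th_hasDerivAt x h0).hasDerivWithinAt) (fun x hx => (h x hx τ h0 h1).1)
      ⟨by linarith, by linarith⟩ ha
    rw [Th_two] at this
    refine this.trans ?_
    gcongr
    rw [Real.norm_eq_abs, abs_le]; constructor <;> linarith [ha.1, ha.2]
  refine ⟨2 * C, by positivity, fun a h1 h2 τ hτ1 => ?_⟩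
  unfold th0 g0 Th0
  by_cases h0 : 0 < τ
  · simp only [h0, if_true]
    have hm : |a| ∈ Icc ρ (4 - ρ) := ⟨h1, h2⟩
    obtain ⟨e1, e2⟩ := h _ hm τ h0 hτ1
    have e3 := hT _ hm τ h0 hτ1
    have hsq : τ ^ 2 ≤ τ := by nlinarith
    have hc : C * τ ^ 2 ≤ C * τ := by gcongr
    have hc0 : 0 ≤ C * τ := by positivity
    rw [abs_of_pos h0]
    rcases lt_or_ge 0 a with ha | ha
    · rw [abs_of_pos ha] at e1 e2 e3
      simp only [st, ha, if_true]
      exact ⟨by linarith, by linarith, by linarith⟩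
    · rw [abs_of_nonpos ha] at e1 e2 e3
      rw [th_neg] at e1
      rw [dth_neg, abs_neg] at e2
      rw [Th_neg] at e3
      simp only [st, not_lt.2 ha, if_false]
      refine ⟨by linarith, by linarith, ?_⟩
      rw [← abs_neg]
      rw [show -(Th a τ - -1 / 2) = -Th a τ - 1 / 2 by ring]
      linarith
  · simp only [h0, if_false, sub_self, abs_zero]
    exact ⟨by positivity, by positivity, by positivity⟩

theorem contOn_Om {F : ℝ → ℝ → ℝ} (hF : ContinuousOn (fun z : ℝ × ℝ => F z.1 z.2) {z | 0 < z.2})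
    (hs : ∀ ρ, 0 < ρ → ρ ≤ 1 → ∃ C, 0 ≤ C ∧ ∀ a, ρ ≤ |a| → |a| ≤ 4 - ρ →
      ∀ τ ≤ 1, |(if 0 < τ then F a τ else 0)| ≤ C * |τ|) :
    ContinuousOn (fun z : ℝ × ℝ => if 0 < z.2 then F z.1 z.2 else 0) Om := by
  intro z hz
  refine ContinuousAt.continuousWithinAt ?_
  rcases lt_trichotomy z.2 0 with h | h | h
  · have : (fun z : ℝ × ℝ => if 0 < z.2 then F z.1 z.2 else 0) =ᶠ[𝓝 z] fun _ => 0 := by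
      filter_upwards [(isOpen_lt continuous_snd continuous_const).mem_nhds h] with w hw
      have : w.2 < 0 := hw
      simp [not_lt.2 this.le]
    exact continuousAt_const.congr this.symm
  · have hz' : 0 < |z.1| ∧ |z.1| < 4 := by
      rcases hz with h' | h'
      · rw [h] at h'; exact absurd h' (lt_irrefl _)
      · exact h'
    set ρ := min 1 (min (|z.1| / 2) ((4 - |z.1|) / 2)) with hρd
    have hρ : 0 < ρ := by
      rw [hρd]; refine lt_min one_pos (lt_min ?_ ?_) <;> linarith [hz'.1, hz'.2]
    have r1 : ρ ≤ |z.1| / 2 := (min_le_right _ _).trans (min_le_left _ _)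
    have r2 : ρ ≤ (4 - |z.1|) / 2 := (min_le_right _ _).trans (min_le_right _ _)
    obtain ⟨C, hC, hb⟩ := hs ρ hρ (min_le_left _ _)
    have hv : (if 0 < z.2 then F z.1 z.2 else 0) = 0 := by simp [h]
    unfold ContinuousAt
    simp only [hv]
    refine squeeze_zero_norm' (a := fun w : ℝ × ℝ => C * |w.2|) ?_ ?_
    · have o1 : ∀ᶠ w : ℝ × ℝ in 𝓝 z, |z.1| / 2 < |w.1| :=
        (continuous_fst.abs.continuousAt).eventually (lt_mem_nhds (by simp only; linarith))
      have o2 : ∀ᶠ w : ℝ × ℝ in 𝓝 z, |w.1| < 4 - (4 - |z.1|) / 2 :=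
        (continuous_fst.abs.continuousAt).eventually (gt_mem_nhds (by simp only; linarith))
      have o3 : ∀ᶠ w : ℝ × ℝ in 𝓝 z, w.2 < 1 :=
        (continuous_snd.continuousAt).eventually (gt_mem_nhds (by simp only [h]; norm_num))
      filter_upwards [o1, o2, o3] with w h1 h2 h3
      exact hb w.1 (by linarith) (by linarith) w.2 h3.le
    · have : Continuous (fun w : ℝ × ℝ => C * |w.2|) := by fun_prop
      have h2 := this.tendsto z
      simpa [h] using h2
  · have : (fun z : ℝ × ℝ => if 0 < z.2 then F z.1 z.2 else 0) =ᶠ[𝓝 z] fun z => F z.1 z.2 := by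
      filter_upwards [(isOpen_lt continuous_const continuous_snd).mem_nhds h] with w hw
      have : 0 < w.2 := hw
      simp [this]
    refine ContinuousAt.congr ?_ this.symm
    exact hF.continuousAt ((isOpen_lt continuous_const continuous_snd).mem_nhds h)

theorem g0_contOn : ContinuousOn (fun z : ℝ × ℝ => g0 z.1 z.2) Om := by
  refine contOn_Om dth_contOn (fun ρ h1 h2 => ?_)
  obtain ⟨C, hC, h⟩ := small0 h1 h2
  exact ⟨C, hC, fun a ha ha' τ hτ => (h a ha ha' τ hτ).2.1⟩

theorem th0_contOn : ContinuousOn (fun z : ℝ × ℝ => th0 z.1 z.2) Om := by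
  refine contOn_Om th_contOn (fun ρ h1 h2 => ?_)
  obtain ⟨C, hC, h⟩ := small0 h1 h2
  exact ⟨C, hC, fun a ha ha' τ hτ => (h a ha ha' τ hτ).1⟩

theorem Th0_hasDerivAt_t {a τ : ℝ} (h : (a, τ) ∈ Om) :
    HasDerivAt (fun τ => Th0 a τ) (g0 a τ) τ := by
  rcases lt_trichotomy τ 0 with h0 | h0 | h0
  · have : (fun τ => Th0 a τ) =ᶠ[𝓝 τ] fun _ => st a := by
      filter_upwards [gt_mem_nhds h0] with w hw
      simp [Th0, not_lt.2 hw.le]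
    have e : g0 a τ = 0 := by simp [g0, not_lt.2 h0.le]
    rw [e]
    exact (hasDerivAt_const τ (st a)).congr_of_eventuallyEq this
  · subst h0
    have hz' : 0 < |a| ∧ |a| < 4 := by
      rcases h with h' | h'
      · exact absurd h' (lt_irrefl _)
      · exact h'
    set ρ := min 1 (min |a| (4 - |a|)) with hρd
    have hρ : 0 < ρ := by
      rw [hρd]; refine lt_min one_pos (lt_min ?_ ?_) <;> linarith [hz'.1, hz'.2]
    have r1 : ρ ≤ |a| := (min_le_right _ _).trans (min_le_left _ _)
    have r2 : ρ ≤ (4 - |a|) := (min_le_right _ _).trans (min_le_right _ _)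
    obtain ⟨C, hC, hb⟩ := small0 hρ (min_le_left _ _)
    have e : g0 a 0 = 0 := by simp [g0]
    have e1 : Th0 a 0 = st a := by simp [Th0]
    rw [e, hasDerivAt_iff_isLittleO]
    simp only [e1, sub_zero, smul_zero]
    have hO : (fun τ => Th0 a τ - st a) =O[𝓝 0] (fun τ : ℝ => τ ^ 2) := by
      refine Asymptotics.IsBigO.of_bound C ?_
      filter_upwards [gt_mem_nhds (show (0:ℝ) < 1 by norm_num)] with w hw
      have := (hb a r1 (by linarith) w hw.le).2.2
      simpa using this
    exact hO.trans_isLittleO (by simpa using Asymptotics.isLittleO_pow_id (𝕜 := ℝ) (by norm_num : 1 < 2))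
  · have : (fun τ => Th0 a τ) =ᶠ[𝓝 τ] fun τ => Th a τ := by
      filter_upwards [lt_mem_nhds h0] with w hw
      simp [Th0, hw]
    have e : g0 a τ = dth a τ := by simp [g0, h0]
    rw [e]
    exact (Th_hasDerivAt_t a h0).congr_of_eventuallyEq this

theorem KC_sub {ρ δ T : ℝ} (hρ : 0 < ρ) (hδ : 0 < δ) : KC ρ δ T ⊆ Om := by
  rintro z ⟨h1, h2, h3 | h3⟩
  · left; linarith
  · right; exact ⟨by linarith [h3.1], by linarith [h3.2]⟩

theorem KC_compact (ρ δ T : ℝ) : IsCompact (KC ρ δ T) := by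
  have hc : IsClosed (KC ρ δ T) := by
    have c1 : IsClosed {z : ℝ × ℝ | |z.1| ≤ 4} := isClosed_le (by fun_prop) (by fun_prop)
    have c2 : IsClosed {z : ℝ × ℝ | |z.2| ≤ T} := isClosed_le (by fun_prop) (by fun_prop)
    have c3 : IsClosed {z : ℝ × ℝ | δ ≤ z.2} := isClosed_le (by fun_prop) (by fun_prop)
    have c4 : IsClosed {z : ℝ × ℝ | ρ ≤ |z.1|} := isClosed_le (by fun_prop) (by fun_prop)
    have c5 : IsClosed {z : ℝ × ℝ | |z.1| ≤ 4 - ρ} := isClosed_le (by fun_prop) (by fun_prop)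
    exact c1.inter (c2.inter (c3.union (c4.inter c5)))
  refine (isCompact_Icc (a := ((-4 : ℝ), -T)) (b := (4, T))).of_isClosed_subset hc ?_
  rintro z ⟨h1, h2, -⟩
  rw [abs_le] at h1 h2
  exact ⟨⟨h1.1, h2.1⟩, ⟨h1.2, h2.2⟩⟩

theorem KC_bd {ρ δ : ℝ} (T : ℝ) (hρ : 0 < ρ) (hδ : 0 < δ) :
    ∃ B, 0 ≤ B ∧ ∀ a τ, (a, τ) ∈ KC ρ δ T → |g0 a τ| ≤ B ∧ |th0 a τ| ≤ B := by
  obtain ⟨B1, h1⟩ := (KC_compact ρ δ T).exists_bound_of_continuousOn (g0_contOn.mono (KC_sub hρ hδ))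
  obtain ⟨B2, h2⟩ := (KC_compact ρ δ T).exists_bound_of_continuousOn (th0_contOn.mono (KC_sub hρ hδ))
  refine ⟨max (max B1 B2) 0, le_max_right _ _, fun a τ h => ⟨?_, ?_⟩⟩
  · exact (h1 _ h).trans ((le_max_left _ _).trans (le_max_left _ _))
  · exact (h2 _ h).trans ((le_max_right _ _).trans (le_max_left _ _))

open Set Filter Topology MeasureTheory

section par
variable {μ : Measure ℝ} {g A S : ℝ → ℝ} {I J : Set ℝ} {ρ δ T : ℝ}

theorem comp_meas {F : ℝ → ℝ → ℝ} (hF : Measurable (fun z : ℝ × ℝ => F z.1 z.2))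
    (hA : AEMeasurable A μ) (hS : AEMeasurable S μ) (x t : ℝ) :
    AEMeasurable (fun ω => F (x + A ω) (t - S ω)) μ :=
  hF.comp_aemeasurable ((hA.const_add x).prodMk (hS.const_sub t))

theorem par_cont (hg : Integrable g μ) (hA : AEMeasurable A μ) (hS : AEMeasurable S μ)
    (hρ : 0 < ρ) (hδ : 0 < δ)
    (h : ∀ᵐ ω ∂μ, ∀ x ∈ I, ∀ t ∈ J, (x + A ω, t - S ω) ∈ KC ρ δ T) :
    ContinuousOn (fun z : ℝ × ℝ => ∫ ω, g ω * g0 (z.1 + A ω) (z.2 - S ω) ∂μ) (I ×ˢ J) := by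
  obtain ⟨B, hB, hb⟩ := KC_bd T hρ hδ
  refine continuousOn_of_dominated (bound := fun ω => |g ω| * B) ?_ ?_ ?_ ?_
  · intro z hz
    exact hg.aestronglyMeasurable.mul (comp_meas g0_meas hA hS _ _).aestronglyMeasurable
  · intro z hz
    filter_upwards [h] with ω hω
    rw [Real.norm_eq_abs, abs_mul]
    gcongr
    exact (hb _ _ (hω _ hz.1 _ hz.2)).1
  · exact hg.abs.mul_const B
  · filter_upwards [h] with ω hω
    refine continuousOn_const.mul ?_
    exact g0_contOn.comp (f := fun z : ℝ × ℝ => (z.1 + A ω, z.2 - S ω)) (by fun_prop)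
      (fun z hz => KC_sub hρ hδ (hω _ hz.1 _ hz.2))

theorem par_x (hg : Integrable g μ) (hA : AEMeasurable A μ) (hS : AEMeasurable S μ)
    (hI : IsOpen I) (hρ : 0 < ρ) (hδ : 0 < δ)
    (h : ∀ᵐ ω ∂μ, ∀ x ∈ I, ∀ t ∈ J, (x + A ω, t - S ω) ∈ KC ρ δ T) {x t : ℝ} (hx : x ∈ I)
    (ht : t ∈ J) :
    Integrable (fun ω => g ω * th0 (x + A ω) (t - S ω)) μ ∧
    HasDerivAt (fun x => ∫ ω, g ω * th0 (x + A ω) (t - S ω) ∂μ)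
      (∫ ω, g ω * g0 (x + A ω) (t - S ω) ∂μ) x := by
  obtain ⟨B, hB, hb⟩ := KC_bd T hρ hδ
  have hint : Integrable (fun ω => g ω * th0 (x + A ω) (t - S ω)) μ := by
    refine (hg.abs.mul_const B).mono' (hg.aestronglyMeasurable.mul
      (comp_meas th0_meas hA hS _ _).aestronglyMeasurable) ?_
    filter_upwards [h] with ω hω
    rw [Real.norm_eq_abs, abs_mul]
    gcongr
    exact (hb _ _ (hω _ hx _ ht)).2
  refine ⟨hint, ?_⟩
  refine (hasDerivAt_integral_of_dominated_loc_of_deriv_le (bound := fun ω => |g ω| * B)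
    (F := fun x ω => g ω * th0 (x + A ω) (t - S ω))
    (F' := fun x ω => g ω * g0 (x + A ω) (t - S ω)) (hI.mem_nhds hx) ?_ hint ?_ ?_ ?_ ?_).2
  · exact Eventually.of_forall fun x => hg.aestronglyMeasurable.mul
      (comp_meas th0_meas hA hS _ _).aestronglyMeasurable
  · exact hg.aestronglyMeasurable.mul (comp_meas g0_meas hA hS _ _).aestronglyMeasurable
  · filter_upwards [h] with ω hω y hy
    rw [Real.norm_eq_abs, abs_mul]
    gcongr
    exact (hb _ _ (hω _ hy _ ht)).1
  · exact hg.abs.mul_const B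
  · filter_upwards [h] with ω hω y hy
    exact ((th0_hasDerivAt _ _).comp_add_const y (A ω)).const_mul _

theorem par_t (hg : Integrable g μ) (hA : AEMeasurable A μ) (hS : AEMeasurable S μ)
    (hJ : IsOpen J) (hρ : 0 < ρ) (hδ : 0 < δ)
    (h : ∀ᵐ ω ∂μ, ∀ x ∈ I, ∀ t ∈ J, (x + A ω, t - S ω) ∈ KC ρ δ T) {x t : ℝ} (hx : x ∈ I)
    (ht : t ∈ J) :
    Integrable (fun ω => g ω * Th0 (x + A ω) (t - S ω)) μ ∧
    HasDerivAt (fun t => ∫ ω, g ω * Th0 (x + A ω) (t - S ω) ∂μ)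
      (∫ ω, g ω * g0 (x + A ω) (t - S ω) ∂μ) t := by
  obtain ⟨B, hB, hb⟩ := KC_bd T hρ hδ
  have hint : Integrable (fun ω => g ω * Th0 (x + A ω) (t - S ω)) μ := by
    refine (hg.abs.mul_const 1).mono' (hg.aestronglyMeasurable.mul
      (comp_meas Th0_meas hA hS _ _).aestronglyMeasurable) ?_
    filter_upwards [h] with ω hω
    rw [Real.norm_eq_abs, abs_mul]
    gcongr
    exact Th0_bd _ _ (hω _ hx _ ht).1
  refine ⟨hint, ?_⟩
  refine (hasDerivAt_integral_of_dominated_loc_of_deriv_le (bound := fun ω => |g ω| * B)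
    (F := fun t ω => g ω * Th0 (x + A ω) (t - S ω))
    (F' := fun t ω => g ω * g0 (x + A ω) (t - S ω)) (hJ.mem_nhds ht) ?_ hint ?_ ?_ ?_ ?_).2
  · exact Eventually.of_forall fun x => hg.aestronglyMeasurable.mul
      (comp_meas Th0_meas hA hS _ _).aestronglyMeasurable
  · exact hg.aestronglyMeasurable.mul (comp_meas g0_meas hA hS _ _).aestronglyMeasurable
  · filter_upwards [h] with ω hω y hy
    rw [Real.norm_eq_abs, abs_mul]
    gcongr
    exact (hb _ _ (hω _ hx _ hy)).1
  · exact hg.abs.mul_const B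
  · filter_upwards [h] with ω hω y hy
    exact ((Th0_hasDerivAt_t (KC_sub hρ hδ (hω _ hx _ hy))).comp_sub_const y (S ω)).const_mul _

end par

noncomputable def Gm (x y τ : ℝ) : ℝ := th0 (x - y) τ + th0 (x + y + 2) τ
noncomputable def Hm (x y τ : ℝ) : ℝ := Th0 (x - y) τ + Th0 (x + y + 2) τ

theorem Gm_nonneg (x y τ : ℝ) : 0 ≤ Gm x y τ := add_nonneg (th0_nonneg _ _) (th0_nonneg _ _)

theorem Gm_pos {τ : ℝ} (h : 0 < τ) (x y : ℝ) : Gm x y τ = th (x - y) τ + th (x + y + 2) τ := by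
  simp [Gm, th0, h]

theorem Hm_pos {τ : ℝ} (h : 0 < τ) (x y : ℝ) : Hm x y τ = Th (x - y) τ + Th (x + y + 2) τ := by
  simp [Hm, Th0, h]

theorem Gm_symm {τ : ℝ} (x y : ℝ) : Gm x y τ = Gm y x τ := by
  by_cases h : 0 < τ
  · rw [Gm_pos h, Gm_pos h, ← th_neg (x - y)]; ring_nf
  · simp [Gm, th0, h]

theorem Gm_meas : Measurable (fun z : ℝ × ℝ × ℝ => Gm z.1 z.2.1 z.2.2) := by
  unfold Gm
  refine Measurable.add ?_ ?_
  · exact th0_meas.comp (g := fun z : ℝ × ℝ => th0 z.1 z.2)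
      (f := fun z : ℝ × ℝ × ℝ => (z.1 - z.2.1, z.2.2)) (by fun_prop)
  · exact th0_meas.comp (g := fun z : ℝ × ℝ => th0 z.1 z.2)
      (f := fun z : ℝ × ℝ × ℝ => (z.1 + z.2.1 + 2, z.2.2)) (by fun_prop)

theorem Hm_meas : Measurable (fun z : ℝ × ℝ × ℝ => Hm z.1 z.2.1 z.2.2) := by
  unfold Hm
  refine Measurable.add ?_ ?_
  · exact Th0_meas.comp (g := fun z : ℝ × ℝ => Th0 z.1 z.2)
      (f := fun z : ℝ × ℝ × ℝ => (z.1 - z.2.1, z.2.2)) (by fun_prop)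
  · exact Th0_meas.comp (g := fun z : ℝ × ℝ => Th0 z.1 z.2)
      (f := fun z : ℝ × ℝ × ℝ => (z.1 + z.2.1 + 2, z.2.2)) (by fun_prop)

theorem Gm_contx {τ : ℝ} (y : ℝ) : Continuous (fun x => Gm x y τ) := by
  have h : Continuous (fun a => th0 a τ) :=
    continuous_iff_continuousAt.2 fun a => (th0_hasDerivAt a τ).continuousAt
  unfold Gm; fun_prop

theorem Gm_conty {τ : ℝ} (x : ℝ) : Continuous (fun y => Gm x y τ) := by
  have h : Continuous (fun a => th0 a τ) :=
    continuous_iff_continuousAt.2 fun a => (th0_hasDerivAt a τ).continuousAt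
  unfold Gm; fun_prop

theorem Hm_derivx {τ : ℝ} (h : 0 < τ) (x y : ℝ) : HasDerivAt (fun x => Hm x y τ) (Gm x y τ) x := by
  simp only [Hm_pos h, Gm_pos h]
  refine ((Th_hasDerivAt (x - y) h).comp_sub_const x y).add ?_
  have := (Th_hasDerivAt (x + (y + 2)) h).comp_add_const x (y + 2)
  simpa only [add_assoc] using this

theorem Hm_left {τ : ℝ} (h : 0 < τ) (y : ℝ) : Hm (-1) y τ = 0 := by
  rw [Hm_pos h, show (-1 - y) = -(-1 + y + 2) by ring, Th_neg]; ring

theorem Hm_right {τ : ℝ} (h : 0 < τ) (y : ℝ) : Hm 1 y τ = 1 := by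
  rw [Hm_pos h, show (1 + y + 2) = -(1 - y) + 4 by ring, Th_add_four, Th_neg]; ring

theorem Hm_int {τ : ℝ} (h : 0 < τ) (x y : ℝ) : ∫ z in (-1:ℝ)..x, Gm z y τ = Hm x y τ := by
  rw [intervalIntegral.integral_eq_sub_of_hasDerivAt (fun z _ => Hm_derivx h z y)
    ((Gm_contx y).intervalIntegrable _ _), Hm_left h, sub_zero]

theorem Hm_mono {τ : ℝ} (h : 0 < τ) (y : ℝ) : Monotone (fun x => Hm x y τ) :=
  monotone_of_hasDerivAt_nonneg (fun x => Hm_derivx h x y) (fun x => Gm_nonneg x y τ)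

theorem Hm_mem {τ : ℝ} (h : 0 < τ) {x : ℝ} (hx : x ∈ Icc (-1:ℝ) 1) (y : ℝ) :
    Hm x y τ ∈ Icc (0:ℝ) 1 := by
  have h1 := Hm_mono h y hx.1
  have h2 := Hm_mono h y hx.2
  simp only [Hm_left h, Hm_right h] at h1 h2
  exact ⟨h1, h2⟩

theorem Gm_int {τ : ℝ} (h : 0 < τ) (y : ℝ) : ∫ z in (-1:ℝ)..1, Gm z y τ = 1 := by
  rw [Hm_int h, Hm_right h]

theorem Gm_int' {τ : ℝ} (h : 0 < τ) (y : ℝ) : ∫ z in (-1:ℝ)..1, Gm y z τ = 1 := by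
  simp_rw [Gm_symm y]; exact Gm_int h y

theorem heatGamma_Gm {τ : ℝ} (h : 0 < τ) (x y : ℝ) : heatGamma x y τ = Gm x y τ := by
  rw [heatGamma_eq x y h, Gm_pos h]

open Set Filter Topology MeasureTheory

noncomputable def yl (a : ℝ) (p : ℝ → ℝ) (s : ℝ) : ℝ := p s - abar a p s
noncomputable def yr (a : ℝ) (p : ℝ → ℝ) (s : ℝ) : ℝ := p s + abar a p s
noncomputable def Gd (a : ℝ) (p : ℝ → ℝ) (x s τ : ℝ) : ℝ := Gm x (yl a p s) τ - Gm x (yr a p s) τ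
noncomputable def Hd (a : ℝ) (p : ℝ → ℝ) (x s τ : ℝ) : ℝ := Hm x (yl a p s) τ - Hm x (yr a p s) τ

structure Sol (T a : ℝ) (fI : ℝ → ℝ) (pI : ℝ) (f : ℝ → ℝ → ℝ) (p lam : ℝ → ℝ) : Prop where
  a_mem : a ∈ Ioo (0:ℝ) 1
  cI : Continuous fI
  pI_mem : pI ∈ Ioo (-1:ℝ) 1
  posI : ∀ x ∈ Ico (-1:ℝ) pI, 0 < fI x
  negI : ∀ x ∈ Ioc pI 1, fI x < 0
  p_cont : ContinuousOn p (Ioo 0 T)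
  p_meas : Measurable p
  p_mem : ∀ t, p t ∈ Ioo (-1:ℝ) 1
  zero : ∀ t ∈ Ioo 0 T, f (p t) t = 0
  pos : ∀ t ∈ Ioo 0 T, ∀ x ∈ Ico (-1:ℝ) (p t), 0 < f x t
  neg : ∀ t ∈ Ioo 0 T, ∀ x ∈ Ioc (p t) 1, f x t < 0
  diff : ∀ t ∈ Ioo 0 T, HasDerivAt (fun x => f x t) (-lam t) (p t)
  lam_nonneg : ∀ t, 0 ≤ lam t
  lam_meas : AEStronglyMeasurable lam volume
  lam_loc : ∀ s t, 0 < s → t < T → IntegrableOn lam (Ioc s t)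
  duh : ∀ t ∈ Ioo 0 T, ∀ x ∈ Icc (-1:ℝ) 1, f x t = (∫ y in (-1:ℝ)..1, Gm x y t * fI y) +
    ∫ s in (0:ℝ)..t, Gd a p x s (t - s) * lam s
  fint : ∀ t ∈ Ioo 0 T, IntegrableOn (fun x => f x t) (Icc (-1:ℝ) 1)

section
variable {T a : ℝ} {fI : ℝ → ℝ} {pI : ℝ} {f : ℝ → ℝ → ℝ} {p lam : ℝ → ℝ}

theorem abar_pos (S : Sol T a fI pI f p lam) (s : ℝ) : 0 < abar a p s := by
  have := S.p_mem s
  exact lt_min S.a_mem.1 (lt_min (by linarith [this.2]) (by linarith [this.1]))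
theorem abar_le1 (a : ℝ) (p : ℝ → ℝ) (s : ℝ) : abar a p s ≤ 1 - p s :=
  (min_le_right _ _).trans (min_le_left _ _)
theorem abar_le2 (a : ℝ) (p : ℝ → ℝ) (s : ℝ) : abar a p s ≤ 1 + p s :=
  (min_le_right _ _).trans (min_le_right _ _)

theorem abar_meas (S : Sol T a fI pI f p lam) : Measurable (abar a p) := by
  have := S.p_meas
  unfold abar; fun_prop
theorem yl_meas (S : Sol T a fI pI f p lam) : Measurable (yl a p) := S.p_meas.sub (abar_meas S)
theorem yr_meas (S : Sol T a fI pI f p lam) : Measurable (yr a p) := S.p_meas.add (abar_meas S)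

theorem yl_mem (S : Sol T a fI pI f p lam) (s : ℝ) : yl a p s ∈ Ico (-1:ℝ) 1 := by
  have := abar_pos S s
  have := abar_le2 a p s
  have := (S.p_mem s).2
  constructor <;> unfold yl <;> linarith
theorem yr_mem (S : Sol T a fI pI f p lam) (s : ℝ) : yr a p s ∈ Ioc (-1:ℝ) 1 := by
  have := abar_pos S s
  have := abar_le1 a p s
  have := (S.p_mem s).1
  constructor <;> unfold yr <;> linarith

theorem Gd_meas (S : Sol T a fI pI f p lam) (t : ℝ) :
    Measurable (fun z : ℝ × ℝ => Gd a p z.1 z.2 (t - z.2)) := by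
  have h1 := yl_meas S
  have h2 := yr_meas S
  exact (Gm_meas.comp (f := fun z : ℝ × ℝ => (z.1, yl a p z.2, t - z.2)) (by fun_prop)).sub
   (Gm_meas.comp (f := fun z : ℝ × ℝ => (z.1, yr a p z.2, t - z.2)) (by fun_prop))

theorem Hd_meas (S : Sol T a fI pI f p lam) (t : ℝ) :
    Measurable (fun z : ℝ × ℝ => Hd a p z.1 z.2 (t - z.2)) := by
  have h1 := yl_meas S
  have h2 := yr_meas S
  exact (Hm_meas.comp (f := fun z : ℝ × ℝ => (z.1, yl a p z.2, t - z.2)) (by fun_prop)).sub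
   (Hm_meas.comp (f := fun z : ℝ × ℝ => (z.1, yr a p z.2, t - z.2)) (by fun_prop))

theorem Gd_contx (a : ℝ) (p : ℝ → ℝ) (s τ : ℝ) : Continuous (fun x => Gd a p x s τ) :=
  (Gm_contx _).sub (Gm_contx _)

theorem Gd_int (a : ℝ) (p : ℝ → ℝ) {τ : ℝ} (h : 0 < τ) (x s : ℝ) :
    ∫ z in (-1:ℝ)..x, Gd a p z s τ = Hd a p x s τ := by
  unfold Gd Hd
  rw [intervalIntegral.integral_sub ((Gm_contx _).intervalIntegrable _ _)
    ((Gm_contx _).intervalIntegrable _ _), Hm_int h, Hm_int h]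

theorem Gd_L1 (a : ℝ) (p : ℝ → ℝ) {τ : ℝ} (h : 0 < τ) (s : ℝ) :
    ∫ z in (-1:ℝ)..1, |Gd a p z s τ| ≤ 2 := by
  have i1 : IntervalIntegrable (fun z => Gm z (yl a p s) τ) volume (-1) 1 :=
    (Gm_contx _).intervalIntegrable _ _
  have i2 : IntervalIntegrable (fun z => Gm z (yr a p s) τ) volume (-1) 1 :=
    (Gm_contx _).intervalIntegrable _ _
  calc ∫ z in (-1:ℝ)..1, |Gd a p z s τ| ≤ ∫ z in (-1:ℝ)..1, (Gm z (yl a p s) τ + Gm z (yr a p s) τ) := by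
        refine intervalIntegral.integral_mono_on (by norm_num)
          ((Gd_contx a p s τ).abs.intervalIntegrable _ _) (i1.add i2) (fun z _ => ?_)
        unfold Gd
        have e1 := Gm_nonneg z (yl a p s) τ
        have e2 := Gm_nonneg z (yr a p s) τ
        rw [abs_le]; constructor <;> linarith
    _ = 2 := by rw [intervalIntegral.integral_add i1 i2, Gm_int h, Gm_int h]; norm_num

noncomputable def U (fI : ℝ → ℝ) (x t : ℝ) : ℝ := ∫ y in (-1:ℝ)..1, Hm x y t * fI y

theorem th0_contx (τ : ℝ) : Continuous (fun a => th0 a τ) :=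
    continuous_iff_continuousAt.2 fun a => (th0_hasDerivAt a τ).continuousAt

theorem Gm_cont2 (τ : ℝ) : Continuous (fun z : ℝ × ℝ => Gm z.1 z.2 τ) := by
  have := th0_contx τ
  unfold Gm; fun_prop

theorem u_cont (hc : Continuous fI) (t : ℝ) :
    Continuous (fun z => ∫ y in (-1:ℝ)..1, Gm z y t * fI y) := by
  refine intervalIntegral.continuous_parametric_intervalIntegral_of_continuous' (f := fun z y => Gm z y t * fI y) ?_ _ _
  exact (Gm_cont2 t).mul (hc.comp continuous_snd)

theorem u_int (hc : Continuous fI) {t : ℝ} (ht : 0 < t) {x : ℝ} (hx : -1 ≤ x) :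
    ∫ z in (-1:ℝ)..x, (∫ y in (-1:ℝ)..1, Gm z y t * fI y) = U fI x t := by
  have hcont : Continuous (fun z : ℝ × ℝ => Gm z.1 z.2 t * fI z.2) :=
    (Gm_cont2 t).mul (hc.comp continuous_snd)
  unfold U
  simp_rw [intervalIntegral.integral_of_le (show (-1:ℝ) ≤ 1 by norm_num)]
  rw [intervalIntegral.integral_of_le hx]
  rw [integral_integral_swap]
  · refine integral_congr_ae (Eventually.of_forall fun y => ?_)
    simp only
    rw [integral_mul_const, ← intervalIntegral.integral_of_le hx, Hm_int ht]
  · rw [Measure.prod_restrict]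
    exact (hcont.continuousOn.integrableOn_compact (isCompact_Icc.prod isCompact_Icc)).mono_set
      (prod_mono Ioc_subset_Icc_self Ioc_subset_Icc_self)

theorem F_formula (S : Sol T a fI pI f p lam) {t : ℝ} (ht : t ∈ Ioo 0 T) {D : ℝ → ℝ}
    (hD : IntegrableOn D (Ioc 0 t))
    (hb : ∀ s ∈ Ioo 0 t, (∫ z in (-1:ℝ)..1, |Gd a p z s (t - s)|) * lam s ≤ D s)
    {x : ℝ} (hx : x ∈ Icc (-1:ℝ) 1) :
    ∫ z in (-1:ℝ)..x, f z t = U fI x t + ∫ s in (0:ℝ)..t, Hd a p x s (t - s) * lam s := by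
  have hmeas : AEStronglyMeasurable (fun z : ℝ × ℝ => Gd a p z.1 z.2 (t - z.2) * lam z.2)
      ((volume.restrict (Ioc (-1) x)).prod (volume.restrict (Ioc 0 t))) :=
    (Gd_meas S t).aestronglyMeasurable.mul (S.lam_meas.restrict.comp_snd)
  have hint : Integrable (fun z : ℝ × ℝ => Gd a p z.1 z.2 (t - z.2) * lam z.2)
      ((volume.restrict (Ioc (-1) x)).prod (volume.restrict (Ioc 0 t))) := by
    rw [integrable_prod_iff' hmeas]
    constructor
    · refine Eventually.of_forall fun s => ?_
      simp only
      have : Continuous (fun z => Gd a p z s (t - s) * lam s) :=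
        (Gd_contx a p s _).mul continuous_const
      exact (this.integrableOn_Icc (a := -1) (b := x)).mono_set Ioc_subset_Icc_self
    · refine Integrable.mono' hD ?_ ?_
      · exact (hmeas.norm.prod_swap).integral_prod_right'
      · have hne : ∀ᵐ s ∂(volume.restrict (Ioc 0 t)), s ≠ t := by
          refine ae_restrict_of_ae ?_
          exact (measure_eq_zero_iff_ae_notMem.1 (measure_singleton t)).mono fun s hs => by simpa using hs
        filter_upwards [hne, ae_restrict_mem measurableSet_Ioc] with s hs1 hs2
        have hs : s ∈ Ioo 0 t := ⟨hs2.1, lt_of_le_of_ne hs2.2 hs1⟩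
        refine le_trans ?_ (hb s hs)
        rw [Real.norm_of_nonneg (by positivity)]
        simp only [norm_mul, Real.norm_eq_abs, abs_of_nonneg (S.lam_nonneg s)]
        rw [integral_mul_const]
        refine mul_le_mul_of_nonneg_right ?_ (S.lam_nonneg s)
        rw [intervalIntegral.integral_of_le (by norm_num)]
        refine setIntegral_mono_set ?_ (Eventually.of_forall fun _ => abs_nonneg _)
          (Ioc_subset_Ioc_right hx.2).eventuallyLE
        exact ((Gd_contx a p s _).abs.integrableOn_Icc).mono_set Ioc_subset_Icc_self
  have e1 : ∫ z in (-1:ℝ)..x, f z t = ∫ z in (-1:ℝ)..x, ((∫ y in (-1:ℝ)..1, Gm z y t * fI y) +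
      ∫ s in (0:ℝ)..t, Gd a p z s (t - s) * lam s) := by
    refine intervalIntegral.integral_congr fun z hz => ?_
    rw [uIcc_of_le hx.1] at hz
    exact S.duh t ht z ⟨hz.1, hz.2.trans hx.2⟩
  have hi2 : IntervalIntegrable (fun z => ∫ s in (0:ℝ)..t, Gd a p z s (t - s) * lam s) volume (-1) x := by
    rw [intervalIntegrable_iff_integrableOn_Ioc_of_le hx.1]
    simp_rw [intervalIntegral.integral_of_le ht.1.le]
    exact hint.integral_prod_left
  rw [e1, intervalIntegral.integral_add ((u_cont S.cI t).intervalIntegrable _ _) hi2,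
    u_int S.cI ht.1 hx.1]
  congr 1
  simp_rw [intervalIntegral.integral_of_le ht.1.le]
  rw [intervalIntegral.integral_of_le hx.1, integral_integral_swap hint]
  have hne : ∀ᵐ s ∂(volume.restrict (Ioc 0 t)), s ≠ t := by
    refine ae_restrict_of_ae ?_
    exact (measure_eq_zero_iff_ae_notMem.1 (measure_singleton t)).mono fun s hs => by simpa using hs
  refine integral_congr_ae ?_
  filter_upwards [hne, ae_restrict_mem measurableSet_Ioc] with s hs1 hs2
  have hs : s < t := lt_of_le_of_ne hs2.2 hs1
  rw [integral_mul_const, ← intervalIntegral.integral_of_le hx.1, Gd_int a p (by linarith)]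

theorem F_formula1 (S : Sol T a fI pI f p lam) {t : ℝ} (ht : t ∈ Ioo 0 T)
    (hL : IntegrableOn lam (Ioc 0 t)) {x : ℝ} (hx : x ∈ Icc (-1:ℝ) 1) :
    ∫ z in (-1:ℝ)..x, f z t = U fI x t + ∫ s in (0:ℝ)..t, Hd a p x s (t - s) * lam s := by
  refine F_formula S ht (hL.const_mul 2) (fun s hs => ?_) hx
  exact mul_le_mul_of_nonneg_right (Gd_L1 a p (by linarith [hs.2]) s) (S.lam_nonneg s)

theorem F_max (S : Sol T a fI pI f p lam) {t : ℝ} (ht : t ∈ Ioo 0 T) {x : ℝ} (hx : x ∈ Icc (-1:ℝ) 1) :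
    ∫ z in (-1:ℝ)..x, f z t ≤ ∫ z in (-1:ℝ)..(p t), f z t := by
  have hi : ∀ u v, u ∈ Icc (-1:ℝ) 1 → v ∈ Icc (-1:ℝ) 1 → IntervalIntegrable (fun z => f z t) volume u v := by
    intro u v hu hv
    refine (IntegrableOn.mono_set (S.fint t ht) ?_).intervalIntegrable
    exact (ordConnected_Icc.uIcc_subset hu hv)
  have hm := S.p_mem t
  have hm' : p t ∈ Icc (-1:ℝ) 1 := ⟨hm.1.le, hm.2.le⟩
  have h1 : (-1:ℝ) ∈ Icc (-1:ℝ) 1 := by norm_num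
  rw [← sub_nonneg, intervalIntegral.integral_interval_sub_left (hi _ _ h1 hm') (hi _ _ h1 hx)]
  rcases le_total x (p t) with h | h
  · refine intervalIntegral.integral_nonneg h fun z hz => ?_
    rcases eq_or_lt_of_le hz.2 with e | e
    · rw [e, S.zero t ht]
    · exact (S.pos t ht z ⟨hx.1.trans hz.1, e⟩).le
  · rw [intervalIntegral.integral_symm, ← intervalIntegral.integral_neg]
    refine intervalIntegral.integral_nonneg h fun z hz => ?_
    rw [neg_nonneg]
    rcases eq_or_lt_of_le hz.1 with e | e
    · rw [← e, S.zero t ht]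
    · exact (S.neg t ht z ⟨e, hz.2.trans hx.2⟩).le
end

open Set Filter Topology MeasureTheory

noncomputable def EK (K : ℝ → ℝ → ℝ) (fI lam y1 y2 : ℝ → ℝ) (T' x t : ℝ) : ℝ :=
  (∫ y in Ioc (-1:ℝ) 1, fI y * K (x + -y) (t - 0)) + (∫ y in Ioc (-1:ℝ) 1, fI y * K (x + (y + 2)) (t - 0))
  + (∫ s in Ioc 0 T', lam s * K (x + -y1 s) (t - s)) + (∫ s in Ioc 0 T', lam s * K (x + (y1 s + 2)) (t - s))
  - (∫ s in Ioc 0 T', lam s * K (x + -y2 s) (t - s)) - (∫ s in Ioc 0 T', lam s * K (x + (y2 s + 2)) (t - s))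

section
variable {fI lam y1 y2 : ℝ → ℝ} {T' q r t0 δ : ℝ}

structure CH (fI lam y1 y2 : ℝ → ℝ) (T' q r t0 δ : ℝ) : Prop where
  fIc : Continuous fI
  lamI : IntegrableOn lam (Ioc 0 T')
  m1 : Measurable y1
  m2 : Measurable y2
  r0 : 0 < r
  rq1 : r ≤ 1 - q
  rq2 : r ≤ 1 + q
  δ0 : 0 < δ
  δt : δ ≤ t0
  hT : T' = t0 + δ
  b1 : ∀ s, y1 s ∈ Icc (-1:ℝ) 1
  b2 : ∀ s, y2 s ∈ Icc (-1:ℝ) 1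
  c1 : ∀ s, |s - t0| ≤ δ → y1 s < q - r / 2
  c2 : ∀ s, |s - t0| ≤ δ → q + r / 2 < y2 s

theorem CH.kc0 (h : CH fI lam y1 y2 T' q r t0 δ) {y : ℝ} (hy : y ∈ Ioc (-1:ℝ) 1) {x t : ℝ}
    (hx : x ∈ Ioo (q - r / 4) (q + r / 4)) (ht : t ∈ Ioo (t0 - δ / 2) (t0 + δ / 2)) :
    (x + -y, t - 0) ∈ KC (r / 4) (δ / 2) T' ∧ (x + (y + 2), t - 0) ∈ KC (r / 4) (δ / 2) T' := by
  have h1 := h.r0; have h2 := h.rq1; have h3 := h.rq2; have h4 := h.δ0; have h5 := h.δt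
  have h6 := h.hT
  obtain ⟨hx1, hx2⟩ := hx; obtain ⟨ht1, ht2⟩ := ht; obtain ⟨hy1, hy2⟩ := hy
  refine ⟨⟨?_, ?_, Or.inl ?_⟩, ⟨?_, ?_, Or.inl ?_⟩⟩ <;> simp only [abs_le] <;>
    first | linarith | (constructor <;> linarith)

theorem CH.kc1 (h : CH fI lam y1 y2 T' q r t0 δ) {s : ℝ} (hs : s ∈ Ioc 0 T') {x t : ℝ}
    (hx : x ∈ Ioo (q - r / 4) (q + r / 4)) (ht : t ∈ Ioo (t0 - δ / 2) (t0 + δ / 2)) {y : ℝ}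
    (hy : y ∈ Icc (-1:ℝ) 1) (hy' : |s - t0| ≤ δ → y < q - r / 2 ∨ q + r / 2 < y) :
    (x + -y, t - s) ∈ KC (r / 4) (δ / 2) T' ∧ (x + (y + 2), t - s) ∈ KC (r / 4) (δ / 2) T' := by
  have h1 := h.r0; have h2 := h.rq1; have h3 := h.rq2; have h4 := h.δ0; have h5 := h.δt
  have h6 := h.hT
  obtain ⟨hx1, hx2⟩ := hx; obtain ⟨ht1, ht2⟩ := ht; obtain ⟨hy1, hy2⟩ := hy
  obtain ⟨hs1, hs2⟩ := hs
  rcases le_or_gt s (t0 - δ) with hc | hc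
  · refine ⟨⟨?_, ?_, Or.inl ?_⟩, ⟨?_, ?_, Or.inl ?_⟩⟩ <;> simp only [abs_le] <;>
      first | linarith | (constructor <;> linarith)
  · have := hy' (by rw [abs_le]; constructor <;> linarith)
    refine ⟨⟨?_, ?_, Or.inr ⟨?_, ?_⟩⟩, ⟨?_, ?_, Or.inr ⟨?_, ?_⟩⟩⟩ <;> simp only [abs_le, le_abs]
    · constructor <;> linarith
    · constructor <;> linarith
    · rcases this with h | h
      · left; linarith
      · right; linarith
    · constructor <;> linarith
    · constructor <;> linarith
    · constructor <;> linarith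
    · left; linarith
    · constructor <;> linarith

theorem CH.k0 (h : CH fI lam y1 y2 T' q r t0 δ) : ∀ᵐ y ∂(volume.restrict (Ioc (-1:ℝ) 1)),
    ∀ x ∈ Ioo (q - r / 4) (q + r / 4), ∀ t ∈ Ioo (t0 - δ / 2) (t0 + δ / 2),
    (x + -y, t - 0) ∈ KC (r / 4) (δ / 2) T' := by
  filter_upwards [ae_restrict_mem measurableSet_Ioc] with y hy x hx t ht using (h.kc0 hy hx ht).1
theorem CH.k0' (h : CH fI lam y1 y2 T' q r t0 δ) : ∀ᵐ y ∂(volume.restrict (Ioc (-1:ℝ) 1)),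
    ∀ x ∈ Ioo (q - r / 4) (q + r / 4), ∀ t ∈ Ioo (t0 - δ / 2) (t0 + δ / 2),
    (x + (y + 2), t - 0) ∈ KC (r / 4) (δ / 2) T' := by
  filter_upwards [ae_restrict_mem measurableSet_Ioc] with y hy x hx t ht using (h.kc0 hy hx ht).2
theorem CH.k1 (h : CH fI lam y1 y2 T' q r t0 δ) : ∀ᵐ s ∂(volume.restrict (Ioc 0 T')),
    ∀ x ∈ Ioo (q - r / 4) (q + r / 4), ∀ t ∈ Ioo (t0 - δ / 2) (t0 + δ / 2),
    (x + -y1 s, t - s) ∈ KC (r / 4) (δ / 2) T' := by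
  filter_upwards [ae_restrict_mem measurableSet_Ioc] with s hs x hx t ht using
    (h.kc1 hs hx ht (h.b1 s) (fun e => Or.inl (h.c1 s e))).1
theorem CH.k1' (h : CH fI lam y1 y2 T' q r t0 δ) : ∀ᵐ s ∂(volume.restrict (Ioc 0 T')),
    ∀ x ∈ Ioo (q - r / 4) (q + r / 4), ∀ t ∈ Ioo (t0 - δ / 2) (t0 + δ / 2),
    (x + (y1 s + 2), t - s) ∈ KC (r / 4) (δ / 2) T' := by
  filter_upwards [ae_restrict_mem measurableSet_Ioc] with s hs x hx t ht using
    (h.kc1 hs hx ht (h.b1 s) (fun e => Or.inl (h.c1 s e))).2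
theorem CH.k2 (h : CH fI lam y1 y2 T' q r t0 δ) : ∀ᵐ s ∂(volume.restrict (Ioc 0 T')),
    ∀ x ∈ Ioo (q - r / 4) (q + r / 4), ∀ t ∈ Ioo (t0 - δ / 2) (t0 + δ / 2),
    (x + -y2 s, t - s) ∈ KC (r / 4) (δ / 2) T' := by
  filter_upwards [ae_restrict_mem measurableSet_Ioc] with s hs x hx t ht using
    (h.kc1 hs hx ht (h.b2 s) (fun e => Or.inr (h.c2 s e))).1
theorem CH.k2' (h : CH fI lam y1 y2 T' q r t0 δ) : ∀ᵐ s ∂(volume.restrict (Ioc 0 T')),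
    ∀ x ∈ Ioo (q - r / 4) (q + r / 4), ∀ t ∈ Ioo (t0 - δ / 2) (t0 + δ / 2),
    (x + (y2 s + 2), t - s) ∈ KC (r / 4) (δ / 2) T' := by
  filter_upwards [ae_restrict_mem measurableSet_Ioc] with s hs x hx t ht using
    (h.kc1 hs hx ht (h.b2 s) (fun e => Or.inr (h.c2 s e))).2

theorem CH.gI (h : CH fI lam y1 y2 T' q r t0 δ) : IntegrableOn fI (Ioc (-1:ℝ) 1) :=
  (h.fIc.integrableOn_Icc).mono_set Ioc_subset_Icc_self

theorem CH.mA (h : CH fI lam y1 y2 T' q r t0 δ) (μ : Measure ℝ) : AEMeasurable (fun s => -y1 s) μ ∧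
    AEMeasurable (fun s => y1 s + 2) μ ∧ AEMeasurable (fun s => -y2 s) μ ∧
    AEMeasurable (fun s => y2 s + 2) μ := by
  have h1 := h.m1; have h2 := h.m2
  refine ⟨?_, ?_, ?_, ?_⟩ <;> exact Measurable.aemeasurable (by fun_prop)

theorem mB (μ : Measure ℝ) : AEMeasurable (fun s : ℝ => -s) μ ∧ AEMeasurable (fun s : ℝ => s + 2) μ ∧
    AEMeasurable (fun _ : ℝ => (0:ℝ)) μ ∧ AEMeasurable (fun s : ℝ => s) μ := by
  refine ⟨?_, ?_, ?_, ?_⟩ <;> exact Measurable.aemeasurable (by fun_prop)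

theorem CH.cont (h : CH fI lam y1 y2 T' q r t0 δ) :
    ContinuousOn (fun z : ℝ × ℝ => EK g0 fI lam y1 y2 T' z.1 z.2)
      (Ioo (q - r / 4) (q + r / 4) ×ˢ Ioo (t0 - δ / 2) (t0 + δ / 2)) := by
  have hr : 0 < r / 4 := by linarith [h.r0]
  have hd : 0 < δ / 2 := by linarith [h.δ0]
  obtain ⟨a1, a2, a3, a4⟩ := h.mA (volume.restrict (Ioc 0 T'))
  obtain ⟨-, -, -, b4⟩ := mB (volume.restrict (Ioc 0 T'))
  obtain ⟨b1, b2, b3, -⟩ := mB (volume.restrict (Ioc (-1:ℝ) 1))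
  exact (((((par_cont h.gI b1 b3 hr hd h.k0).add (par_cont h.gI b2 b3 hr hd h.k0')).add
    (par_cont h.lamI a1 b4 hr hd h.k1)).add (par_cont h.lamI a2 b4 hr hd h.k1')).sub
    (par_cont h.lamI a3 b4 hr hd h.k2)).sub (par_cont h.lamI a4 b4 hr hd h.k2')

theorem CH.dx (h : CH fI lam y1 y2 T' q r t0 δ) {x t : ℝ}
    (hx : x ∈ Ioo (q - r / 4) (q + r / 4)) (ht : t ∈ Ioo (t0 - δ / 2) (t0 + δ / 2)) :
    HasDerivAt (fun x => EK th0 fI lam y1 y2 T' x t) (EK g0 fI lam y1 y2 T' x t) x := by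
  have hr : 0 < r / 4 := by linarith [h.r0]
  have hd : 0 < δ / 2 := by linarith [h.δ0]
  obtain ⟨a1, a2, a3, a4⟩ := h.mA (volume.restrict (Ioc 0 T'))
  obtain ⟨-, -, -, b4⟩ := mB (volume.restrict (Ioc 0 T'))
  obtain ⟨b1, b2, b3, -⟩ := mB (volume.restrict (Ioc (-1:ℝ) 1))
  exact ((((((par_x h.gI b1 b3 isOpen_Ioo hr hd h.k0 hx ht).2.add
    (par_x h.gI b2 b3 isOpen_Ioo hr hd h.k0' hx ht).2).add
    (par_x h.lamI a1 b4 isOpen_Ioo hr hd h.k1 hx ht).2).add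
    (par_x h.lamI a2 b4 isOpen_Ioo hr hd h.k1' hx ht).2).sub
    (par_x h.lamI a3 b4 isOpen_Ioo hr hd h.k2 hx ht).2).sub
    (par_x h.lamI a4 b4 isOpen_Ioo hr hd h.k2' hx ht).2)

theorem CH.dt (h : CH fI lam y1 y2 T' q r t0 δ) {x t : ℝ}
    (hx : x ∈ Ioo (q - r / 4) (q + r / 4)) (ht : t ∈ Ioo (t0 - δ / 2) (t0 + δ / 2)) :
    HasDerivAt (fun t => EK Th0 fI lam y1 y2 T' x t) (EK g0 fI lam y1 y2 T' x t) t := by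
  have hr : 0 < r / 4 := by linarith [h.r0]
  have hd : 0 < δ / 2 := by linarith [h.δ0]
  obtain ⟨a1, a2, a3, a4⟩ := h.mA (volume.restrict (Ioc 0 T'))
  obtain ⟨-, -, -, b4⟩ := mB (volume.restrict (Ioc 0 T'))
  obtain ⟨b1, b2, b3, -⟩ := mB (volume.restrict (Ioc (-1:ℝ) 1))
  exact ((((((par_t h.gI b1 b3 isOpen_Ioo hr hd h.k0 hx ht).2.add
    (par_t h.gI b2 b3 isOpen_Ioo hr hd h.k0' hx ht).2).add
    (par_t h.lamI a1 b4 isOpen_Ioo hr hd h.k1 hx ht).2).add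
    (par_t h.lamI a2 b4 isOpen_Ioo hr hd h.k1' hx ht).2).sub
    (par_t h.lamI a3 b4 isOpen_Ioo hr hd h.k2 hx ht).2).sub
    (par_t h.lamI a4 b4 isOpen_Ioo hr hd h.k2' hx ht).2)

theorem EK_collect {K : ℝ → ℝ → ℝ} {x t : ℝ}
    (i1 : IntegrableOn (fun y => fI y * K (x + -y) (t - 0)) (Ioc (-1:ℝ) 1))
    (i2 : IntegrableOn (fun y => fI y * K (x + (y + 2)) (t - 0)) (Ioc (-1:ℝ) 1))
    (i3 : IntegrableOn (fun s => lam s * K (x + -y1 s) (t - s)) (Ioc 0 T'))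
    (i4 : IntegrableOn (fun s => lam s * K (x + (y1 s + 2)) (t - s)) (Ioc 0 T'))
    (i5 : IntegrableOn (fun s => lam s * K (x + -y2 s) (t - s)) (Ioc 0 T'))
    (i6 : IntegrableOn (fun s => lam s * K (x + (y2 s + 2)) (t - s)) (Ioc 0 T')) :
    IntegrableOn (fun s => ((K (x - y1 s) (t - s) + K (x + y1 s + 2) (t - s)) -
      (K (x - y2 s) (t - s) + K (x + y2 s + 2) (t - s))) * lam s) (Ioc 0 T') ∧
    EK K fI lam y1 y2 T' x t = (∫ y in (-1:ℝ)..1, (K (x - y) t + K (x + y + 2) t) * fI y) +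
    ∫ s in Ioc 0 T', ((K (x - y1 s) (t - s) + K (x + y1 s + 2) (t - s)) -
      (K (x - y2 s) (t - s) + K (x + y2 s + 2) (t - s))) * lam s := by
  have e : (fun s => ((K (x - y1 s) (t - s) + K (x + y1 s + 2) (t - s)) -
      (K (x - y2 s) (t - s) + K (x + y2 s + 2) (t - s))) * lam s) =
      fun s => lam s * K (x + -y1 s) (t - s) + lam s * K (x + (y1 s + 2)) (t - s)
      - lam s * K (x + -y2 s) (t - s) - lam s * K (x + (y2 s + 2)) (t - s) := by
    ext s
    simp only [← sub_eq_add_neg, ← add_assoc]; ring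
  have e' : (fun y => (K (x - y) t + K (x + y + 2) t) * fI y) =
      fun y => fI y * K (x + -y) (t - 0) + fI y * K (x + (y + 2)) (t - 0) := by
    ext s
    simp only [← sub_eq_add_neg, ← add_assoc, sub_zero]; ring
  rw [e, e']
  refine ⟨((i3.add i4).sub i5).sub i6, ?_⟩
  rw [intervalIntegral.integral_of_le (by norm_num), integral_add i1 i2]
  have j1 := integral_sub ((i3.add i4).sub i5) i6
  have j2 := integral_sub (i3.add i4) i5
  have j3 := integral_add i3 i4
  simp only [Pi.add_apply, Pi.sub_apply] at j1 j2 j3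
  rw [j1, j2, j3]
  unfold EK; ring

theorem CH.colx (h : CH fI lam y1 y2 T' q r t0 δ) {x t : ℝ}
    (hx : x ∈ Ioo (q - r / 4) (q + r / 4)) (ht : t ∈ Ioo (t0 - δ / 2) (t0 + δ / 2)) :
    EK th0 fI lam y1 y2 T' x t = (∫ y in (-1:ℝ)..1, Gm x y t * fI y) +
    ∫ s in Ioc 0 T', (Gm x (y1 s) (t - s) - Gm x (y2 s) (t - s)) * lam s := by
  have hr : 0 < r / 4 := by linarith [h.r0]
  have hd : 0 < δ / 2 := by linarith [h.δ0]
  obtain ⟨a1, a2, a3, a4⟩ := h.mA (volume.restrict (Ioc 0 T'))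
  obtain ⟨-, -, -, b4⟩ := mB (volume.restrict (Ioc 0 T'))
  obtain ⟨b1, b2, b3, -⟩ := mB (volume.restrict (Ioc (-1:ℝ) 1))
  exact (EK_collect (par_x h.gI b1 b3 isOpen_Ioo hr hd h.k0 hx ht).1
    (par_x h.gI b2 b3 isOpen_Ioo hr hd h.k0' hx ht).1
    (par_x h.lamI a1 b4 isOpen_Ioo hr hd h.k1 hx ht).1
    (par_x h.lamI a2 b4 isOpen_Ioo hr hd h.k1' hx ht).1
    (par_x h.lamI a3 b4 isOpen_Ioo hr hd h.k2 hx ht).1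
    (par_x h.lamI a4 b4 isOpen_Ioo hr hd h.k2' hx ht).1).2

theorem CH.colt (h : CH fI lam y1 y2 T' q r t0 δ) {x t : ℝ}
    (hx : x ∈ Ioo (q - r / 4) (q + r / 4)) (ht : t ∈ Ioo (t0 - δ / 2) (t0 + δ / 2)) :
    IntegrableOn (fun s => (Hm x (y1 s) (t - s) - Hm x (y2 s) (t - s)) * lam s) (Ioc 0 T') ∧
    EK Th0 fI lam y1 y2 T' x t = (∫ y in (-1:ℝ)..1, Hm x y t * fI y) +
    ∫ s in Ioc 0 T', (Hm x (y1 s) (t - s) - Hm x (y2 s) (t - s)) * lam s := by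
  have hr : 0 < r / 4 := by linarith [h.r0]
  have hd : 0 < δ / 2 := by linarith [h.δ0]
  obtain ⟨a1, a2, a3, a4⟩ := h.mA (volume.restrict (Ioc 0 T'))
  obtain ⟨-, -, -, b4⟩ := mB (volume.restrict (Ioc 0 T'))
  obtain ⟨b1, b2, b3, -⟩ := mB (volume.restrict (Ioc (-1:ℝ) 1))
  exact (EK_collect (par_t h.gI b1 b3 isOpen_Ioo hr hd h.k0 hx ht).1
    (par_t h.gI b2 b3 isOpen_Ioo hr hd h.k0' hx ht).1
    (par_t h.lamI a1 b4 isOpen_Ioo hr hd h.k1 hx ht).1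
    (par_t h.lamI a2 b4 isOpen_Ioo hr hd h.k1' hx ht).1
    (par_t h.lamI a3 b4 isOpen_Ioo hr hd h.k2 hx ht).1
    (par_t h.lamI a4 b4 isOpen_Ioo hr hd h.k2' hx ht).1)
end

open Set Filter Topology MeasureTheory

section
variable {T a : ℝ} {fI : ℝ → ℝ} {pI : ℝ} {f : ℝ → ℝ → ℝ} {p lam : ℝ → ℝ}

theorem CH_exists (S : Sol T a fI pI f p lam) (hL : ∀ t, t < T → IntegrableOn lam (Ioc 0 t))
    {t0 : ℝ} (ht0 : t0 ∈ Ioo 0 T) : ∃ δ, 0 < δ ∧ t0 + δ < T ∧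
      CH fI lam (yl a p) (yr a p) (t0 + δ) (p t0) (abar a p t0) t0 δ ∧
      (∀ t, |t - t0| ≤ δ → |p t - p t0| < abar a p t0 / 4) := by
  have hc : ContinuousAt p t0 := S.p_cont.continuousAt (isOpen_Ioo.mem_nhds ht0)
  have hca : ContinuousAt (abar a p) t0 := by unfold abar; fun_prop
  have hr := abar_pos S t0
  obtain ⟨δ1, h1, h1'⟩ := Metric.continuousAt_iff.1 hc (abar a p t0 / 8) (by linarith)
  obtain ⟨δ2, h2, h2'⟩ := Metric.continuousAt_iff.1 hca (abar a p t0 / 8) (by linarith)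
  simp only [Real.dist_eq] at h1' h2'
  set δ := min (min (δ1 / 2) (δ2 / 2)) (min t0 ((T - t0) / 2)) with hδ
  have d1 : δ ≤ δ1 / 2 := (min_le_left _ _).trans (min_le_left _ _)
  have d2 : δ ≤ δ2 / 2 := (min_le_left _ _).trans (min_le_right _ _)
  have d3 : δ ≤ t0 := (min_le_right _ _).trans (min_le_left _ _)
  have d4 : δ ≤ (T - t0) / 2 := (min_le_right _ _).trans (min_le_right _ _)
  have d0 : 0 < δ := by
    refine lt_min (lt_min ?_ ?_) (lt_min ht0.1 ?_) <;> linarith [ht0.2]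
  have dT : t0 + δ < T := by linarith [ht0.2]
  refine ⟨δ, d0, dT, ⟨S.cI, hL _ dT, yl_meas S, yr_meas S, hr, abar_le1 _ _ _, abar_le2 _ _ _,
    d0, d3, rfl, fun s => ⟨(yl_mem S s).1, (yl_mem S s).2.le⟩,
    fun s => ⟨(yr_mem S s).1.le, (yr_mem S s).2⟩, ?_, ?_⟩, ?_⟩
  · intro s hs
    have e1 := abs_lt.1 (@h1' s (by linarith))
    have e2 := abs_lt.1 (@h2' s (by linarith))
    unfold yl; linarith
  · intro s hs
    have e1 := abs_lt.1 (@h1' s (by linarith))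
    have e2 := abs_lt.1 (@h2' s (by linarith))
    unfold yr; linarith
  · intro s hs
    linarith [@h1' s (by linarith)]

theorem F_deriv (S : Sol T a fI pI f p lam) (hL : ∀ t, t < T → IntegrableOn lam (Ioc 0 t))
    {t0 : ℝ} (ht0 : t0 ∈ Ioo 0 T) : ∃ κ > 0, ∃ φ : ℝ × ℝ → ℝ, 
      (∀ t, |t - t0| < κ → t ∈ Ioo 0 T) ∧ ContinuousAt φ (p t0, t0) ∧ φ (p t0, t0) = 0 ∧
      (∀ x t, |x - p t0| < κ → |t - t0| < κ → 
        HasDerivAt (fun t => ∫ z in (-1:ℝ)..x, f z t) (φ (x, t)) t) := by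
  obtain ⟨δ, hδ, hδT, h, hp⟩ := CH_exists S hL ht0
  have hr := h.r0
  set r := abar a p t0
  set q := p t0
  set y1 := yl a p
  set y2 := yr a p
  set V : ℝ × ℝ → ℝ := fun z => EK g0 fI lam y1 y2 (t0 + δ) z.1 z.2 with hV
  have hδt := h.δt
  have hrq1 := h.rq1
  have hrq2 := h.rq2
  have hJ : ∀ t ∈ Ioo (t0 - δ / 2) (t0 + δ / 2), t ∈ Ioo 0 T := by
    intro t ht; constructor <;> linarith [ht.1, ht.2]
  have hIcc : ∀ x ∈ Ioo (q - r / 4) (q + r / 4), x ∈ Ioo (-1:ℝ) 1 := by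
    intro x hx; constructor <;> linarith [hx.1, hx.2]
  have hpI : ∀ t ∈ Ioo (t0 - δ / 2) (t0 + δ / 2), p t ∈ Ioo (q - r / 4) (q + r / 4) := by
    intro t ht
    have := abs_lt.1 (hp t (by rw [abs_le]; constructor <;> linarith [ht.1, ht.2]))
    constructor <;> linarith
  have hne : ∀ t, ∀ᵐ s ∂(volume.restrict (Ioc 0 (t0 + δ))), s ≠ t := by
    intro t
    refine ae_restrict_of_ae ?_
    exact (measure_eq_zero_iff_ae_notMem.1 (measure_singleton t)).mono fun s hs => by simpa using hs
  have hf : ∀ t ∈ Ioo (t0 - δ / 2) (t0 + δ / 2), ∀ x ∈ Ioo (q - r / 4) (q + r / 4),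
      f x t = EK th0 fI lam y1 y2 (t0 + δ) x t := by
    intro t ht x hx
    have hx' := hIcc x hx
    rw [h.colx hx ht, S.duh t (hJ t ht) x ⟨hx'.1.le, hx'.2.le⟩]
    congr 1
    rw [intervalIntegral.integral_of_le (hJ t ht).1.le]
    symm
    refine (setIntegral_eq_of_subset_of_forall_sdiff_eq_zero measurableSet_Ioc
      (Ioc_subset_Ioc_right (by linarith [ht.2])) ?_)
    intro s hs
    have : ¬ (0 < t - s) := by
      intro hh
      exact hs.2 ⟨hs.1.1, by linarith⟩
    simp [Gm, th0, this]
  have hlam : ∀ t ∈ Ioo (t0 - δ / 2) (t0 + δ / 2), lam t = - V (p t, t) := by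
    intro t ht
    have d1 := S.diff t (hJ t ht)
    have d2 := h.dx (hpI t ht) ht
    have d3 : HasDerivAt (fun x => f x t) (V (p t, t)) (p t) := by
      refine d2.congr_of_eventuallyEq ?_
      filter_upwards [isOpen_Ioo.mem_nhds (hpI t ht)] with x hx using hf t ht x hx
    linarith [d1.unique d3]
  have hF : ∀ t ∈ Ioo (t0 - δ / 2) (t0 + δ / 2), ∀ x ∈ Ioo (q - r / 4) (q + r / 4),
      ∫ z in (-1:ℝ)..x, f z t = EK Th0 fI lam y1 y2 (t0 + δ) x t - ∫ s in t..(t0 + δ), lam s := by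
    intro t ht x hx
    have hx' := hIcc x hx
    obtain ⟨i1, e1⟩ := h.colt hx ht
    rw [e1, F_formula1 S (hJ t ht) (hL t (hJ t ht).2) ⟨hx'.1.le, hx'.2.le⟩, add_sub_assoc]
    congr 1
    have htd : t ≤ t0 + δ := by linarith [ht.2]
    rw [intervalIntegral.integral_of_le (hJ t ht).1.le, intervalIntegral.integral_of_le htd,
      ← Ioc_union_Ioc_eq_Ioc (hJ t ht).1.le htd, setIntegral_union (Ioc_disjoint_Ioc_of_le le_rfl)
      measurableSet_Ioc (i1.mono_set (Ioc_subset_Ioc_right htd))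
      (i1.mono_set (Ioc_subset_Ioc_left (hJ t ht).1.le))]
    have : ∫ s in Ioc t (t0 + δ), (Hm x (y1 s) (t - s) - Hm x (y2 s) (t - s)) * lam s =
        ∫ s in Ioc t (t0 + δ), lam s := by
      refine setIntegral_congr_fun measurableSet_Ioc fun s hs => ?_
      have hts : ¬ (0 < t - s) := by linarith [hs.1]
      have hsd : |s - t0| ≤ δ := by rw [abs_le]; constructor <;> linarith [hs.1, hs.2, ht.1]
      have hy1 := h.c1 s hsd
      have hy2 := h.c2 s hsd
      have hb1 := h.b1 s
      have hb2 := h.b2 s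
      have s1 : 0 < x - y1 s := by linarith [hx.1]
      have s2 : ¬ (0 < x - y2 s) := by linarith [hx.2]
      have s3 : 0 < x + y1 s + 2 := by linarith [hb1.1, hx'.1]
      have s4 : 0 < x + y2 s + 2 := by linarith [hb2.1, hx'.1]
      simp only [Hm, Th0, hts, if_false, st, s1, s2, s3, s4, if_true]
      norm_num
    rw [this]
    simp only [Hd]
    ring
  have ht0' : t0 ∈ Ioo (t0 - δ / 2) (t0 + δ / 2) := by constructor <;> linarith
  have hVp : ContinuousOn (fun t => V (p t, t)) (Ioo (t0 - δ / 2) (t0 + δ / 2)) := by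
    refine h.cont.comp (f := fun t => (p t, t)) ?_ ?_
    · exact (S.p_cont.mono hJ).prodMk continuousOn_id
    · intro t ht; exact ⟨hpI t ht, ht⟩
  refine ⟨min (r / 4) (δ / 2), lt_min (by linarith) (by linarith),
    fun z => V z - V (p z.2, z.2), ?_, ?_, ?_, ?_⟩
  · intro t ht
    have := abs_lt.1 (ht.trans_le (min_le_right _ _))
    exact hJ t ⟨by linarith, by linarith⟩
  · have c1 : ContinuousAt V (q, t0) := h.cont.continuousAt
      ((isOpen_Ioo.prod isOpen_Ioo).mem_nhds ⟨hpI t0 ht0', ht0'⟩)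
    have c2 : ContinuousAt (fun t => V (p t, t)) t0 := hVp.continuousAt (isOpen_Ioo.mem_nhds ht0')
    exact c1.sub (ContinuousAt.comp (x := (q, t0)) (f := Prod.snd) c2 continuousAt_snd)
  · simp [q]
  · intro x t hx ht
    have hx1 := abs_lt.1 (hx.trans_le (min_le_left _ _))
    have ht1 := abs_lt.1 (ht.trans_le (min_le_right _ _))
    have hx2 : x ∈ Ioo (q - r / 4) (q + r / 4) := ⟨by linarith, by linarith⟩
    have ht2 : t ∈ Ioo (t0 - δ / 2) (t0 + δ / 2) := ⟨by linarith, by linarith⟩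
    have hlc : ContinuousOn lam (Ioo (t0 - δ / 2) (t0 + δ / 2)) := hVp.neg.congr hlam
    have dl : HasDerivAt (fun t => ∫ s in t..(t0 + δ), lam s) (- lam t) t := by
      refine intervalIntegral.integral_hasDerivAt_left ?_ ?_ ?_
      · rw [intervalIntegrable_iff_integrableOn_Ioc_of_le (by linarith)]
        exact S.lam_loc t _ (hJ t ht2).1 hδT
      · exact S.lam_meas.stronglyMeasurableAtFilter
      · exact hlc.continuousAt (isOpen_Ioo.mem_nhds ht2)
    have := (h.dt hx2 ht2).sub dl
    rw [hlam t ht2, neg_neg] at this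
    refine this.congr_of_eventuallyEq ?_
    filter_upwards [isOpen_Ioo.mem_nhds ht2] with t' ht' using hF t' ht' x hx2

theorem M_deriv (S : Sol T a fI pI f p lam) (hL : ∀ t, t < T → IntegrableOn lam (Ioc 0 t))
    {t0 : ℝ} (ht0 : t0 ∈ Ioo 0 T) : HasDerivAt (fun t => ∫ z in (-1:ℝ)..(p t), f z t) 0 t0 := by
  obtain ⟨κ, hκ, φ, hκT, hφc, hφ0, hd⟩ := F_deriv S hL ht0
  rw [hasDerivAt_iff_isLittleO]
  simp only [smul_zero, sub_zero]
  rw [Asymptotics.isLittleO_iff]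
  intro η hη
  obtain ⟨ε, hε, hε'⟩ := Metric.continuousAt_iff.1 hφc η hη
  have hc : ContinuousAt p t0 := S.p_cont.continuousAt (isOpen_Ioo.mem_nhds ht0)
  have hbd : ∀ x t, |x - p t0| < min κ ε → |t - t0| < min κ ε → |φ (x, t)| ≤ η := by
    intro x t hx ht
    have := @hε' (x, t) (by
      rw [Prod.dist_eq, Real.dist_eq, Real.dist_eq]
      exact max_lt (hx.trans_le (min_le_right _ _)) (ht.trans_le (min_le_right _ _)))
    rw [hφ0, Real.dist_eq, sub_zero] at this
    exact this.le
  have hm : 0 < min κ ε := lt_min hκ hε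
  have hmv : ∀ x t, |x - p t0| < min κ ε → |t - t0| < min κ ε →
      |(∫ z in (-1:ℝ)..x, f z t) - ∫ z in (-1:ℝ)..x, f z t0| ≤ η * |t - t0| := by
    intro x t hx ht
    have := (convex_ball t0 (min κ ε)).norm_image_sub_le_of_norm_hasDerivWithin_le
      (f := fun t => ∫ z in (-1:ℝ)..x, f z t) (f' := fun t => φ (x, t)) (C := η) (x := t0) (y := t)
      (fun s hs => (hd x s (hx.trans_le (min_le_left _ _))
        ((by simpa [Real.dist_eq] using hs : |s - t0| < min κ ε).trans_le (min_le_left _ _))).hasDerivWithinAt)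
      (fun s hs => hbd x s hx (by rw [← Real.dist_eq]; exact hs)) (Metric.mem_ball_self hm)
      (by rw [Metric.mem_ball, Real.dist_eq]; exact ht)
    exact this
  have hpn : ∀ᶠ t in 𝓝 t0, |p t - p t0| < min κ ε := by
    have := Metric.tendsto_nhds.1 hc _ hm
    simpa only [Real.dist_eq] using this
  have htn : ∀ᶠ t in 𝓝 t0, |t - t0| < min κ ε := by
    have := Metric.ball_mem_nhds t0 hm
    filter_upwards [this] with t ht
    rw [← Real.dist_eq]; exact ht
  filter_upwards [hpn, htn] with t h1 h2
  have hT := hκT t (h2.trans_le (min_le_left _ _))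
  have pm := S.p_mem t
  have pm0 := S.p_mem t0
  have b1 := abs_le.1 (hmv (p t0) t (by simpa using hm) h2)
  have b2 := abs_le.1 (hmv (p t) t h1 h2)
  have m1 := F_max S hT (x := p t0) ⟨pm0.1.le, pm0.2.le⟩
  have m2 := F_max S ht0 (x := p t) ⟨pm.1.le, pm.2.le⟩
  rw [Real.norm_eq_abs, Real.norm_eq_abs, abs_le]
  constructor <;> linarith

theorem M_const (S : Sol T a fI pI f p lam) (hL : ∀ t, t < T → IntegrableOn lam (Ioc 0 t))
    {t t' : ℝ} (ht : t ∈ Ioo 0 T) (ht' : t' ∈ Ioo 0 T) :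
    ∫ z in (-1:ℝ)..(p t), f z t = ∫ z in (-1:ℝ)..(p t'), f z t' := by
  refine isOpen_Ioo.is_const_of_deriv_eq_zero isPreconnected_Ioo
    (f := fun t => ∫ z in (-1:ℝ)..(p t), f z t) (s := Ioo 0 T) ?_ ?_ ht ht'
  · intro t ht; exact (M_deriv S hL ht).differentiableAt.differentiableWithinAt
  · intro t ht; exact (M_deriv S hL ht).deriv
end

open Set Filter Topology MeasureTheory

section
variable {T a : ℝ} {fI : ℝ → ℝ} {pI : ℝ} {f : ℝ → ℝ → ℝ} {p lam : ℝ → ℝ}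

theorem Th0_tendsto {b : ℝ} (h0 : 0 < |b|) (h4 : |b| < 4) :
    Tendsto (fun τ => Th0 b τ) (𝓝[>] 0) (𝓝 (st b)) := by
  have : (b, (0:ℝ)) ∈ Om := Or.inr ⟨h0, h4⟩
  have h := (Th0_hasDerivAt_t this).continuousAt.tendsto
  have e : Th0 b 0 = st b := by simp [Th0]
  rw [e] at h
  exact h.mono_left nhdsWithin_le_nhds

theorem U_tendsto_in (hc : Continuous fI) {x : ℝ} (hx : x ∈ Ioo (-1:ℝ) 1) :
    Tendsto (fun t => U fI x t) (𝓝[>] 0) (𝓝 (∫ y in (-1:ℝ)..x, fI y)) := by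
  have hlim : (∫ y in (-1:ℝ)..x, fI y) = ∫ y in Ioc (-1:ℝ) 1, (Iic x).indicator fI y := by
    rw [setIntegral_indicator measurableSet_Iic, intervalIntegral.integral_of_le hx.1.le]
    congr 2
    ext y; simp only [mem_Ioc, mem_inter_iff, mem_Iic]
    constructor
    · rintro ⟨h1, h2⟩; exact ⟨⟨h1, h2.trans hx.2.le⟩, h2⟩
    · rintro ⟨⟨h1, _⟩, h2⟩; exact ⟨h1, h2⟩
  rw [hlim]
  unfold U
  simp_rw [intervalIntegral.integral_of_le (show (-1:ℝ) ≤ 1 by norm_num)]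
  refine tendsto_integral_filter_of_dominated_convergence (fun y => |fI y|) ?_ ?_ ?_ ?_
  · refine Eventually.of_forall fun t => ?_
    refine AEStronglyMeasurable.mul ?_ hc.aestronglyMeasurable
    exact (Hm_meas.comp (f := fun y : ℝ => (x, y, t)) (by fun_prop)).aestronglyMeasurable
  · filter_upwards [self_mem_nhdsWithin] with t ht
    refine Eventually.of_forall fun y => ?_
    have := Hm_mem (show 0 < t from ht) (x := x) ⟨hx.1.le, hx.2.le⟩ y
    rw [norm_mul, Real.norm_of_nonneg this.1]
    exact mul_le_of_le_one_left (abs_nonneg _) this.2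
  · exact (hc.abs.integrableOn_Icc).mono_set Ioc_subset_Icc_self
  · have hne : ∀ᵐ s ∂(volume.restrict (Ioc (-1:ℝ) 1)), s ≠ x := by
      refine ae_restrict_of_ae ?_
      exact (measure_eq_zero_iff_ae_notMem.1 (measure_singleton x)).mono fun s hs => by simpa using hs
    filter_upwards [hne, ae_restrict_mem measurableSet_Ioc] with y hy1 hy2
    have hp : 0 < x + y + 2 := by linarith [hy2.1, hx.1]
    have e1 := Th0_tendsto (b := x - y) (abs_pos.2 (sub_ne_zero.2 hy1.symm))
      (by rw [abs_lt]; constructor <;> linarith [hy2.1, hy2.2, hx.1, hx.2])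
    have e2 := Th0_tendsto (b := x + y + 2) (abs_pos.2 hp.ne')
      (by rw [abs_lt]; constructor <;> linarith [hy2.1, hy2.2, hx.1, hx.2])
    have e3 := (e1.add e2).mul_const (fI y)
    have : (Iic x).indicator fI y = (st (x - y) + st (x + y + 2)) * fI y := by
      simp only [st, hp, if_true]
      rcases lt_or_gt_of_ne hy1 with h | h
      · rw [indicator_of_mem (by exact h.le), if_pos (by linarith)]; ring
      · rw [indicator_of_notMem (by simpa using h), if_neg (by linarith)]; ring
    rw [this]
    exact e3

theorem U_tendsto (hc : Continuous fI) {x : ℝ} (hx : x ∈ Icc (-1:ℝ) 1) :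
    Tendsto (fun t => U fI x t) (𝓝[>] 0) (𝓝 (∫ y in (-1:ℝ)..x, fI y)) := by
  rcases eq_or_lt_of_le hx.1 with h | h
  · subst h
    refine tendsto_const_nhds.congr' ?_
    filter_upwards [self_mem_nhdsWithin] with t ht
    unfold U
    simp [Hm_left (show 0 < t from ht)]
  rcases eq_or_lt_of_le hx.2 with h' | h'
  · subst h'
    refine tendsto_const_nhds.congr' ?_
    filter_upwards [self_mem_nhdsWithin] with t ht
    unfold U
    simp [Hm_right (show 0 < t from ht)]
  · exact U_tendsto_in hc ⟨h, h'⟩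

theorem u_bd (hc : Continuous fI) : ∃ C, 0 ≤ C ∧ ∀ t, 0 < t → ∀ z, |∫ y in (-1:ℝ)..1, Gm z y t * fI y| ≤ C := by
  obtain ⟨C, hC⟩ := isCompact_Icc.exists_bound_of_continuousOn (s := Icc (-1:ℝ) 1) hc.continuousOn
  have hC0 : 0 ≤ C := (norm_nonneg _).trans (hC 0 (by norm_num))
  refine ⟨C, hC0, fun t ht z => ?_⟩
  have i1 : IntervalIntegrable (fun y => Gm z y t * C) volume (-1) 1 :=
    ((Gm_conty z).mul continuous_const).intervalIntegrable _ _
  have := intervalIntegral.norm_integral_le_of_norm_le (a := (-1:ℝ)) (b := 1) (μ := volume)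
    (f := fun y => Gm z y t * fI y) (by norm_num) (Eventually.of_forall fun y hy => ?_) i1
  · rw [intervalIntegral.integral_mul_const, Gm_int' ht, one_mul] at this
    exact this
  · rw [norm_mul, Real.norm_of_nonneg (Gm_nonneg _ _ _)]
    exact mul_le_mul_of_nonneg_left (hC y ⟨hy.1.le, hy.2⟩) (Gm_nonneg _ _ _)

theorem U_lip (hc : Continuous fI) : ∃ C, 0 ≤ C ∧ ∀ t, 0 < t → ∀ x ∈ Icc (-1:ℝ) 1, ∀ x' ∈ Icc (-1:ℝ) 1,
    |U fI x t - U fI x' t| ≤ C * |x - x'| := by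
  obtain ⟨C, hC0, hC⟩ := u_bd hc
  refine ⟨C, hC0, fun t ht x hx x' hx' => ?_⟩
  rw [← u_int hc ht hx.1, ← u_int hc ht hx'.1, intervalIntegral.integral_interval_sub_left
    ((u_cont hc t).intervalIntegrable _ _) ((u_cont hc t).intervalIntegrable _ _)]
  rw [intervalIntegral.integral_symm, abs_neg]
  have := intervalIntegral.norm_integral_le_of_norm_le_const (a := x) (b := x') (C := C)
    (f := fun z => ∫ y in (-1:ℝ)..1, Gm z y t * fI y) fun z hz => hC t ht z
  rw [abs_sub_comm x x']; exact this

theorem FI_max (S : Sol T a fI pI f p lam) {x : ℝ} (hx : x ∈ Icc (-1:ℝ) 1) :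
    ∫ z in (-1:ℝ)..x, fI z ≤ ∫ z in (-1:ℝ)..pI, fI z := by
  have hm := S.pI_mem
  have h0 : fI pI = 0 := by
    have hc := S.cI
    apply le_antisymm
    · refine le_of_tendsto ((hc.tendsto pI).mono_left (nhdsWithin_le_nhds (s := Ioi pI))) ?_
      filter_upwards [Ioo_mem_nhdsGT hm.2] with y hy using (S.negI y ⟨hy.1, hy.2.le⟩).le
    · refine ge_of_tendsto ((hc.tendsto pI).mono_left (nhdsWithin_le_nhds (s := Iio pI))) ?_
      filter_upwards [Ioo_mem_nhdsLT hm.1] with y hy using (S.posI y ⟨hy.1.le, hy.2⟩).le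
  have hi : ∀ u v, IntervalIntegrable fI volume u v := fun u v => S.cI.intervalIntegrable u v
  rw [← sub_nonneg, intervalIntegral.integral_interval_sub_left (hi _ _) (hi _ _)]
  rcases le_total x pI with h | h
  · refine intervalIntegral.integral_nonneg h fun z hz => ?_
    rcases eq_or_lt_of_le hz.2 with e | e
    · rw [e, h0]
    · exact (S.posI z ⟨hx.1.trans hz.1, e⟩).le
  · rw [intervalIntegral.integral_symm, ← intervalIntegral.integral_neg]
    refine intervalIntegral.integral_nonneg h fun z hz => ?_
    rw [neg_nonneg]
    rcases eq_or_lt_of_le hz.1 with e | e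
    · rw [← e, h0]
    · exact (S.negI z ⟨e, hz.2.trans hx.2⟩).le

theorem Hd_bd {τ : ℝ} (h : 0 < τ) {x : ℝ} (hx : x ∈ Icc (-1:ℝ) 1) (s : ℝ) : |Hd a p x s τ| ≤ 1 := by
  have h1 := Hm_mem h hx (yl a p s)
  have h2 := Hm_mem h hx (yr a p s)
  unfold Hd
  rw [abs_le]; constructor <;> linarith [h1.1, h1.2, h2.1, h2.2]

theorem src_bd (S : Sol T a fI pI f p lam) {t : ℝ} (ht : 0 < t) (hL : IntegrableOn lam (Ioc 0 t))
    {x : ℝ} (hx : x ∈ Icc (-1:ℝ) 1) :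
    |∫ s in (0:ℝ)..t, Hd a p x s (t - s) * lam s| ≤ ∫ s in (0:ℝ)..t, lam s := by
  have hne : ∀ᵐ s : ℝ, s ≠ t :=
    (measure_eq_zero_iff_ae_notMem.1 (measure_singleton t)).mono fun s hs => by simpa using hs
  rw [← Real.norm_eq_abs]
  refine intervalIntegral.norm_integral_le_of_norm_le ht.le ?_
    ((intervalIntegrable_iff_integrableOn_Ioc_of_le ht.le).2 hL)
  filter_upwards [hne] with s hs1 hs2
  rw [norm_mul, Real.norm_of_nonneg (S.lam_nonneg s)]
  exact mul_le_of_le_one_left (S.lam_nonneg s)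
    (Hd_bd (by have := lt_of_le_of_ne hs2.2 hs1; linarith) hx s)

theorem prim_tendsto {g : ℝ → ℝ} {t1 : ℝ} (h1 : 0 < t1) (hL : IntegrableOn g (Ioc 0 t1)) :
    Tendsto (fun t => ∫ s in (0:ℝ)..t, g s) (𝓝[>] 0) (𝓝 0) := by
  have hi := (intervalIntegrable_iff_integrableOn_Ioc_of_le h1.le).2 hL
  have hc := intervalIntegral.continuousOn_primitive_interval' hi left_mem_uIcc 0 left_mem_uIcc
  have h2 : Tendsto (fun t => ∫ s in (0:ℝ)..t, g s) (𝓝[uIcc 0 t1] 0) (𝓝 0) := by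
    have := hc.tendsto; simpa using this
  refine h2.mono_left ?_
  rw [uIcc_of_le h1.le]
  exact nhdsWithin_le_of_mem (Icc_mem_nhdsGT h1)

theorem final (S : Sol T a fI pI f p lam) (hL : ∀ t, t < T → IntegrableOn lam (Ioc 0 t))
    {t : ℝ} (ht : t ∈ Ioo 0 T) :
    ∫ z in (-1:ℝ)..(p t), f z t = ∫ z in (-1:ℝ)..pI, fI z := by
  have hT : 0 < T := ht.1.trans ht.2
  set m := ∫ z in (-1:ℝ)..(p t), f z t
  have hM : ∀ t' ∈ Ioo 0 T, ∫ z in (-1:ℝ)..(p t'), f z t' = m := fun t' h => M_const S hL h ht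
  have hprim := prim_tendsto ht.1 (hL t ht.2)
  have hT' : ∀ᶠ t' in 𝓝[>] (0:ℝ), t' ∈ Ioo 0 T := Ioo_mem_nhdsGT hT
  have hsrc : ∀ y : ℝ → ℝ, (∀ t', y t' ∈ Icc (-1:ℝ) 1) →
      Tendsto (fun t' => ∫ s in (0:ℝ)..t', Hd a p (y t') s (t' - s) * lam s) (𝓝[>] 0) (𝓝 0) := by
    intro y hy
    refine squeeze_zero_norm' ?_ hprim
    filter_upwards [hT'] with t' h
    exact src_bd S h.1 (hL t' h.2) (hy t')
  have hpI : pI ∈ Icc (-1:ℝ) 1 := ⟨S.pI_mem.1.le, S.pI_mem.2.le⟩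
  have hpm : ∀ t', p t' ∈ Icc (-1:ℝ) 1 := fun t' => ⟨(S.p_mem t').1.le, (S.p_mem t').2.le⟩
  apply le_antisymm
  · have hseq : Tendsto (fun n : ℕ => T / ((n:ℝ) + 2)) atTop (𝓝[>] 0) := by
      refine tendsto_nhdsWithin_iff.2 ⟨?_, Eventually.of_forall fun n => ?_⟩
      · exact tendsto_const_nhds.div_atTop
          (tendsto_atTop_add_const_right _ _ tendsto_natCast_atTop_atTop)
      · show 0 < T / ((n:ℝ) + 2)
        positivity
    obtain ⟨p0, hp0, φ, hφ, hlim⟩ := isCompact_Icc.tendsto_subseq (s := Icc (-1:ℝ) 1)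
      (x := fun n : ℕ => p (T / ((n:ℝ) + 2))) (fun n => hpm _)
    have hseq' := hseq.comp hφ.tendsto_atTop
    obtain ⟨C, hC0, hC⟩ := U_lip S.cI
    have h1 := ((hsrc p hpm).comp hseq')
    have h2 := (U_tendsto S.cI hp0).comp hseq'
    have h3 : Tendsto (fun n => U fI (p (T / ((φ n:ℝ) + 2))) (T / ((φ n:ℝ) + 2))
        - U fI p0 (T / ((φ n:ℝ) + 2))) atTop (𝓝 0) := by
      have : Tendsto (fun n => C * |p (T / ((φ n:ℝ) + 2)) - p0|) atTop (𝓝 0) := by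
        have := ((hlim.sub_const p0).abs).const_mul C
        simpa using this
      refine squeeze_zero_norm (fun n => ?_) this
      exact hC _ (by positivity) _ (hpm _) _ hp0
    have h4 := (h3.add h2).add h1
    have h5 : Tendsto (fun _ : ℕ => m) atTop (𝓝 (0 + (∫ y in (-1:ℝ)..p0, fI y) + 0)) := by
      refine h4.congr' ?_
      filter_upwards [hseq'.eventually hT'] with n hn
      have hn' : T / ((φ n:ℝ) + 2) ∈ Ioo 0 T := hn
      rw [← hM _ hn', F_formula1 S hn' (hL _ hn'.2) (hpm _)]
      simp only [Function.comp]
      ring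
    have := tendsto_nhds_unique tendsto_const_nhds h5
    rw [this, zero_add, add_zero]
    exact FI_max S hp0
  · have h1 := (U_tendsto S.cI hpI).add (hsrc (fun _ => pI) (fun _ => hpI))
    rw [add_zero] at h1
    refine le_of_tendsto h1 ?_
    filter_upwards [hT'] with t' h
    rw [← hM t' h]
    rw [← F_formula1 S h (hL t' h.2) hpI]
    exact F_max S h hpI

theorem final2 (S : Sol T a fI pI f p lam) (hL : ∀ t, t < T → IntegrableOn lam (Ioc 0 t))
    {t : ℝ} (ht : t ∈ Ioo 0 T) :
    ∫ z in (p t)..1, f z t = ∫ z in pI..1, fI z := by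
  have h1 : ∫ z in (-1:ℝ)..1, f z t = ∫ z in (-1:ℝ)..1, fI z := by
    rw [F_formula1 S ht (hL t ht.2) (by norm_num)]
    have e1 : U fI 1 t = ∫ z in (-1:ℝ)..1, fI z := by
      unfold U; simp [Hm_right ht.1]
    have e2 : ∫ s in (0:ℝ)..t, Hd a p 1 s (t - s) * lam s = 0 := by
      have hne : ∀ᵐ s : ℝ, s ≠ t :=
        (measure_eq_zero_iff_ae_notMem.1 (measure_singleton t)).mono fun s hs => by simpa using hs
      refine (intervalIntegral.integral_congr_ae ?_).trans intervalIntegral.integral_zero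
      filter_upwards [hne] with s hs1 hs2
      rw [uIoc_of_le ht.1.le] at hs2
      have : 0 < t - s := by have := lt_of_le_of_ne hs2.2 hs1; linarith
      simp [Hd, Hm_right this]
    rw [e1, e2, add_zero]
  have hi : ∀ u v, u ∈ Icc (-1:ℝ) 1 → v ∈ Icc (-1:ℝ) 1 → IntervalIntegrable (fun z => f z t) volume u v := by
    intro u v hu hv
    refine (IntegrableOn.mono_set (S.fint t ht) ?_).intervalIntegrable
    exact (ordConnected_Icc.uIcc_subset hu hv)
  have hpm : p t ∈ Icc (-1:ℝ) 1 := ⟨(S.p_mem t).1.le, (S.p_mem t).2.le⟩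
  have h2 := intervalIntegral.integral_add_adjacent_intervals (hi (-1) (p t) (by norm_num) hpm)
    (hi (p t) 1 hpm (by norm_num))
  have h3 := intervalIntegral.integral_add_adjacent_intervals (S.cI.intervalIntegrable (μ := volume) (-1) pI)
    (S.cI.intervalIntegrable pI 1)
  have h4 := final S hL ht
  linarith
end

open Set Filter Topology MeasureTheory

section
variable {T a : ℝ} {fI : ℝ → ℝ} {pI : ℝ} {f : ℝ → ℝ → ℝ} {p lam : ℝ → ℝ}

theorem ux_bd (hc : Continuous fI) {f' : ℝ → ℝ} (hd : ∀ x ∈ Ioo (-1:ℝ) 1, HasDerivAt fI (f' x) x)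
    (hf' : ContinuousOn f' (Icc (-1:ℝ) 1)) {C : ℝ} (hC : ∀ x ∈ Icc (-1:ℝ) 1, |f' x| ≤ C)
    {t x : ℝ} (ht : 0 < t) (hx : x ∈ Ioo (-1:ℝ) 1) :
    ∃ d, HasDerivAt (fun x => ∫ y in (-1:ℝ)..1, Gm x y t * fI y) d x ∧ |d| ≤ C := by
  have hg : Integrable fI (volume.restrict (Ioc (-1:ℝ) 1)) :=
    (hc.integrableOn_Icc).mono_set Ioc_subset_Icc_self
  have H1 := par_x (μ := volume.restrict (Ioc (-1:ℝ) 1)) (g := fI) (A := fun y => -y) (S := fun _ => 0)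
    (I := Ioo (-1:ℝ) 1) (J := {t}) (ρ := 1) (δ := t) (T := t) hg (by fun_prop) (by fun_prop) isOpen_Ioo
    one_pos ht (by
      filter_upwards [ae_restrict_mem measurableSet_Ioc] with y hy z hz s hs
      simp only [mem_singleton_iff] at hs
      subst hs
      simp only [KC, sub_zero, mem_ofPred_eq, mem_Ioc, mem_Ioo, abs_le] at *
      refine ⟨⟨?_, ?_⟩, ?_⟩ <;> (try linarith) <;> (try simp) <;> (try exact ht.le)) hx rfl
  have H2 := par_x (μ := volume.restrict (Ioc (-1:ℝ) 1)) (g := fI) (A := fun y => y + 2) (S := fun _ => 0)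
    (I := Ioo (-1:ℝ) 1) (J := {t}) (ρ := 1) (δ := t) (T := t) hg (by fun_prop) (by fun_prop) isOpen_Ioo
    one_pos ht (by
      filter_upwards [ae_restrict_mem measurableSet_Ioc] with y hy z hz s hs
      simp only [mem_singleton_iff] at hs
      subst hs
      simp only [KC, sub_zero, mem_ofPred_eq, mem_Ioc, mem_Ioo, abs_le] at *
      refine ⟨⟨?_, ?_⟩, ?_⟩ <;> (try linarith) <;> (try simp) <;> (try exact ht.le)) hx rfl
  simp only [sub_zero] at H1 H2
  have hth := th0_contx t
  have hg0 : Continuous (fun a => g0 a t) := by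
    have : (fun a => g0 a t) = fun a => dth a t := by funext a; simp [g0, ht]
    rw [this]
    exact dth_contOn.comp_continuous (f := fun a : ℝ => (a, t)) (by fun_prop) (fun a => ht)
  have hD := H1.2.add H2.2
  have e0 : (fun x => ∫ y in (-1:ℝ)..1, Gm x y t * fI y) =
      (fun x => ∫ ω in Ioc (-1:ℝ) 1, fI ω * th0 (x + -ω) t) +
      (fun x => ∫ ω in Ioc (-1:ℝ) 1, fI ω * th0 (x + (ω + 2)) t) := by
    funext z
    simp only [Pi.add_apply]
    rw [← intervalIntegral.integral_of_le (by norm_num), ← intervalIntegral.integral_of_le (by norm_num),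
      ← intervalIntegral.integral_add]
    · refine intervalIntegral.integral_congr fun y _ => ?_
      simp only [Gm, ← sub_eq_add_neg, ← add_assoc]; ring
    · exact Continuous.intervalIntegrable (by fun_prop) _ _
    · exact Continuous.intervalIntegrable (by fun_prop) _ _
  refine ⟨_, e0 ▸ hD, ?_⟩
  rw [← intervalIntegral.integral_of_le (by norm_num), ← intervalIntegral.integral_of_le (by norm_num),
      ← intervalIntegral.integral_add (Continuous.intervalIntegrable (by fun_prop) _ _)
      (Continuous.intervalIntegrable (by fun_prop) _ _)]
  set v : ℝ → ℝ := fun y => -th0 (x - y) t + th0 (x + y + 2) t with hv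
  have hvd : ∀ y, HasDerivAt v (g0 (x - y) t + g0 (x + y + 2) t) y := by
    intro y
    have h1 := ((th0_hasDerivAt (x - y) t).comp_const_sub x y).neg
    have h2 := (th0_hasDerivAt (x + y + 2) t).comp y (((hasDerivAt_id y).const_add x).add_const 2)
    have := h1.add h2
    refine (this.congr_deriv (by simp)).congr_of_eventuallyEq (Eventually.of_forall fun z => ?_)
    simp [hv]
  have hvc : Continuous v := by rw [hv]; fun_prop
  have v1 : v 1 = 0 := by
    simp only [hv, th0, ht, if_true]
    rw [show x + 1 + 2 = (x - 1) + 4 by ring, th_add_four]; ring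
  have v2 : v (-1) = 0 := by
    simp only [hv, th0, ht, if_true]
    rw [show x + -1 + 2 = (x - -1) by ring]; ring
  have hvb : ∀ y, |v y| ≤ Gm x y t := by
    intro y
    simp only [hv, Gm]
    have e1 := th0_nonneg (x - y) t
    have e2 := th0_nonneg (x + y + 2) t
    rw [abs_le]; constructor <;> linarith
  have hfi : IntervalIntegrable f' volume (-1) 1 := by
    refine ContinuousOn.intervalIntegrable ?_
    rwa [uIcc_of_le (by norm_num)]
  have ibp := intervalIntegral.integral_mul_deriv_eq_deriv_mul_of_hasDerivAt (a := -1) (b := 1)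
    (u := fI) (v := v) (u' := f') (v' := fun y => g0 (x - y) t + g0 (x + y + 2) t)
    hc.continuousOn hvc.continuousOn (by
      intro y hy; refine hd y ?_; simpa using hy) (fun y _ => hvd y) hfi
      (Continuous.intervalIntegrable (by fun_prop) _ _)
  rw [v1, v2] at ibp
  have e3 : (∫ y in (-1:ℝ)..1, (fI y * g0 (x + -y) t + fI y * g0 (x + (y + 2)) t)) =
      - ∫ y in (-1:ℝ)..1, f' y * v y := by
    rw [show - ∫ y in (-1:ℝ)..1, f' y * v y = fI 1 * 0 - fI (-1) * 0 - ∫ y in (-1:ℝ)..1, f' y * v y by ring,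
      ← ibp]
    refine intervalIntegral.integral_congr fun y _ => ?_
    simp only [← sub_eq_add_neg, ← add_assoc]; ring
  rw [e3, abs_neg, ← Real.norm_eq_abs]
  have hb : ‖∫ y in (-1:ℝ)..1, f' y * v y‖ ≤ ∫ y in (-1:ℝ)..1, C * Gm x y t := by
    refine intervalIntegral.norm_integral_le_of_norm_le (by norm_num) ?_
      (Continuous.intervalIntegrable (by have := Gm_conty (τ := t) x; fun_prop) _ _)
    refine Eventually.of_forall fun y hy => ?_
    rw [Real.norm_eq_abs, abs_mul]
    exact mul_le_mul (hC y ⟨hy.1.le, hy.2⟩) (hvb y) (abs_nonneg _)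
      ((abs_nonneg _).trans (hC y ⟨hy.1.le, hy.2⟩))
  rwa [intervalIntegral.integral_const_mul, Gm_int' ht, mul_one] at hb

theorem hL_beta (S : Sol T a fI pI f p lam) {f' : ℝ → ℝ}
    (hd : ∀ x ∈ Ioo (-1:ℝ) 1, HasDerivAt fI (f' x) x)
    (hf' : ContinuousOn f' (Icc (-1:ℝ) 1))
    (h : ∀ t ∈ Ioo 0 T, ∃ᶠ x in 𝓝[≠] (p t),
      ¬ IntervalIntegrable (fun s => Gd a p x s (t - s) * lam s) volume 0 t) :
    ∀ t, t < T → IntegrableOn lam (Ioc 0 t) := by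
  obtain ⟨C, hC⟩ := isCompact_Icc.exists_bound_of_continuousOn hf'
  have hlam : ∀ t ∈ Ioo 0 T, lam t ≤ C := by
    intro t ht
    obtain ⟨d, hd1, hd2⟩ := ux_bd S.cI hd hf' hC ht.1 (S.p_mem t)
    have hdd := (S.diff t ht).sub hd1
    by_contra hlt
    push Not at hlt
    have hne : -lam t - d ≠ 0 := by
      intro h0
      have : lam t = -d := by linarith
      have := neg_le_abs d
      linarith
    have hev := hdd.eventually_ne (c := 0) hne
    have hnb : ∀ᶠ x in 𝓝[≠] (p t), x ∈ Ioo (-1:ℝ) 1 :=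
      nhdsWithin_le_nhds (isOpen_Ioo.mem_nhds (S.p_mem t))
    obtain ⟨x, hx1, hx2, hx3⟩ := ((h t ht).and_eventually (hev.and hnb)).exists
    apply hx2
    have := S.duh t ht x ⟨hx3.1.le, hx3.2.le⟩
    rw [intervalIntegral.integral_undef hx1, add_zero] at this
    simp only [Pi.sub_apply]
    linarith
  intro t ht
  refine Measure.integrableOn_of_bounded (M := C) (by simp) S.lam_meas ?_
  filter_upwards [ae_restrict_mem measurableSet_Ioc] with s hs
  rw [Real.norm_of_nonneg (S.lam_nonneg s)]
  exact hlam s ⟨hs.1, hs.2.trans_lt ht⟩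
end

open Set Filter Topology MeasureTheory

section
variable {T a : ℝ} {fI : ℝ → ℝ} {pI : ℝ} {f : ℝ → ℝ → ℝ} {p lam : ℝ → ℝ}

noncomputable def cn (a : ℝ) (p : ℝ → ℝ) (n : ℕ) (s : ℝ) : ℝ :=
  Real.cos (kk n * (yl a p s + 1)) - Real.cos (kk n * (yr a p s + 1))

theorem cn_eq (a : ℝ) (p : ℝ → ℝ) (n : ℕ) (s : ℝ) : cn a p n s =
    2 * Real.sin ((n + 1 : ℕ) * (Real.pi * (p s + 1) / 2)) * Real.sin ((n + 1 : ℕ) * (Real.pi * abar a p s / 2)) := by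
  unfold cn
  rw [Real.cos_sub_cos]
  have e1 : (kk n * (yl a p s + 1) + kk n * (yr a p s + 1)) / 2 = (n + 1 : ℕ) * (Real.pi * (p s + 1) / 2) := by
    unfold kk yl yr; push_cast; ring
  have e2 : (kk n * (yl a p s + 1) - kk n * (yr a p s + 1)) / 2 = -((n + 1 : ℕ) * (Real.pi * abar a p s / 2)) := by
    unfold kk yl yr; push_cast; ring
  rw [e1, e2, Real.sin_neg]; ring

theorem abs_sin_nat_le (n : ℕ) (x : ℝ) : |Real.sin (n * x)| ≤ n * |Real.sin x| := by
  induction n with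
  | zero => simp
  | succ n ih =>
    push_cast
    rw [add_mul, one_mul, Real.sin_add]
    have h1 := abs_add_le (Real.sin (n * x) * Real.cos x) (Real.cos (n * x) * Real.sin x)
    rw [abs_mul, abs_mul] at h1
    have h2 := Real.abs_cos_le_one x
    have h3 := Real.abs_cos_le_one (n * x)
    nlinarith [abs_nonneg (Real.sin x), abs_nonneg (Real.sin (n * x))]

theorem sin_ge {z m : ℝ} (h1 : m ≤ z) (h2 : z ≤ 2 - m) (h0 : 0 ≤ m) : m ≤ Real.sin (Real.pi * z / 2) := by
  have hp := Real.pi_pos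
  rcases le_total z 1 with h | h
  · have := Real.mul_le_sin (x := Real.pi * z / 2) (by have := h0.trans h1; positivity) (by nlinarith)
    have e : 2 / Real.pi * (Real.pi * z / 2) = z := by field_simp
    linarith
  · have := Real.mul_le_sin (x := Real.pi * (2 - z) / 2)
      (by have : 0 ≤ 2 - z := by linarith
          positivity) (by nlinarith)
    have e : 2 / Real.pi * (Real.pi * (2 - z) / 2) = 2 - z := by field_simp
    rw [show Real.pi * (2 - z) / 2 = Real.pi - Real.pi * z / 2 by ring, Real.sin_pi_sub] at this
    rw [show Real.pi - Real.pi * z / 2 = Real.pi * (2 - z) / 2 by ring] at this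
    linarith

theorem w_ge (S : Sol T a fI pI f p lam) (s : ℝ) : 2 * abar a p s ^ 2 ≤ cn a p 0 s := by
  rw [cn_eq]
  have h0 := (abar_pos S s).le
  have h1 := abar_le1 a p s
  have h2 := abar_le2 a p s
  have e1 := sin_ge (z := p s + 1) (m := abar a p s) (by linarith) (by linarith) h0
  have e2 := sin_ge (z := abar a p s) (m := abar a p s) le_rfl (by linarith) h0
  simp only [zero_add, Nat.cast_one, one_mul]
  nlinarith

theorem w_pos (S : Sol T a fI pI f p lam) (s : ℝ) : 0 < cn a p 0 s := by
  have := w_ge S s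
  have := abar_pos S s
  nlinarith

theorem cn_bd (S : Sol T a fI pI f p lam) (n : ℕ) (s : ℝ) : |cn a p n s| ≤ kk n ^ 2 * cn a p 0 s := by
  have h := (w_pos S s).le
  have h1 : |cn a p n s| ≤ (n + 1 : ℕ) ^ 2 * cn a p 0 s := by
    rw [← abs_of_nonneg h, cn_eq, cn_eq, abs_mul, abs_mul, abs_mul, abs_mul]
    simp only [zero_add, Nat.cast_one, one_mul]
    have e1 := abs_sin_nat_le (n + 1) (Real.pi * (p s + 1) / 2)
    have e2 := abs_sin_nat_le (n + 1) (Real.pi * abar a p s / 2)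
    have := mul_le_mul e1 e2 (abs_nonneg _) (by positivity)
    rw [abs_two]
    nlinarith
  refine h1.trans (mul_le_mul_of_nonneg_right ?_ h)
  have := kk_ge' n
  push_cast
  gcongr

theorem Gm_fourier {τ : ℝ} (h : 0 < τ) (x y : ℝ) :
    HasSum (fun n => ee n τ * Real.cos (kk n * (y + 1)) * Real.cos (kk n * (x + 1))) (Gm x y τ - 1 / 2) := by
  have key : ∀ z, HasSum (fun n => ee n τ * Real.cos (kk n * z) / 2) (th z τ - 1 / 4) := by
    intro z
    have hs : Summable (fun n => ee n τ * Real.cos (kk n * z) / 2) := by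
      refine Summable.of_norm_bounded (summable_kk 0 h) (fun n => ?_)
      have := th_bd n z (le_refl τ)
      have h1 := Real.abs_cos_le_one (kk n * z)
      have h2 := ee_pos n τ
      rw [Real.norm_eq_abs, abs_div, abs_mul, abs_of_pos h2, abs_two, pow_zero, one_mul]
      nlinarith
    have := hs.hasSum
    unfold th
    convert this using 1
    ring
  have := (key (x - y)).add (key (x + y + 2))
  rw [Gm_pos h]
  convert this using 1
  · funext n
    rw [show kk n * (x - y) = kk n * (x + 1) - kk n * (y + 1) by ring,
      show kk n * (x + y + 2) = kk n * (x + 1) + kk n * (y + 1) by ring, Real.cos_sub, Real.cos_add]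
    ring
  · ring

theorem Gd_fourier (a : ℝ) (p : ℝ → ℝ) {τ : ℝ} (h : 0 < τ) (x s : ℝ) :
    HasSum (fun n => ee n τ * cn a p n s * Real.cos (kk n * (x + 1))) (Gd a p x s τ) := by
  have := (Gm_fourier h x (yl a p s)).sub (Gm_fourier h x (yr a p s))
  unfold Gd cn
  rw [show Gm x (yl a p s) τ - Gm x (yr a p s) τ =
    Gm x (yl a p s) τ - 1 / 2 - (Gm x (yr a p s) τ - 1 / 2) by ring]
  refine this.congr_fun (fun n => ?_)
  ring

theorem Gd_w_bd (S : Sol T a fI pI f p lam) {δ : ℝ} (hδ : 0 < δ) : ∃ B, 0 ≤ B ∧ ∀ x s τ, δ ≤ τ →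
    |Gd a p x s τ| ≤ B * cn a p 0 s := by
  have hs := summable_kk 2 hδ
  refine ⟨∑' n, kk n ^ 2 * ee n δ, tsum_nonneg fun n => ?_, fun x s τ hτ => ?_⟩
  · have := (ee_pos n δ).le; positivity
  · rw [← (Gd_fourier a p (hδ.trans_le hτ) x s).tsum_eq, ← Real.norm_eq_abs]
    refine tsum_of_norm_bounded (hs.hasSum.mul_right (cn a p 0 s)) (fun n => ?_)
    have h1 := Real.abs_cos_le_one (kk n * (x + 1))
    have h2 := ee_pos n τ
    have h3 := cn_bd S n s
    have h4 := ee_anti n hτ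
    rw [Real.norm_eq_abs, abs_mul, abs_mul, abs_of_pos h2]
    calc ee n τ * |cn a p n s| * |Real.cos (kk n * (x + 1))| ≤ ee n δ * (kk n ^ 2 * cn a p 0 s) * 1 := by
          have := w_pos S s
          have := ee_pos n δ
          gcongr
      _ = _ := by ring

theorem cn_meas (S : Sol T a fI pI f p lam) (n : ℕ) : Measurable (cn a p n) := by
  have h1 := yl_meas S
  have h2 := yr_meas S
  unfold cn; fun_prop
end

open Set Filter Topology MeasureTheory

theorem kk_pos (n : ℕ) : 0 < kk n := by linarith [kk_ge n]

theorem int_cos_zero {m : ℕ} (hm : m ≠ 0) : ∫ x in (-1:ℝ)..1, Real.cos (m * (Real.pi / 2) * (x + 1)) = 0 := by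
  have hc : (m : ℝ) * (Real.pi / 2) ≠ 0 := by
    have := Real.pi_pos
    have : (m : ℝ) ≠ 0 := by exact_mod_cast hm
    positivity
  have hd : ∀ x : ℝ, HasDerivAt (fun x => Real.sin (m * (Real.pi / 2) * (x + 1)) / (m * (Real.pi / 2)))
      (Real.cos (m * (Real.pi / 2) * (x + 1))) x := by
    intro x
    have h1 := ((((hasDerivAt_id x).add_const 1).const_mul (m * (Real.pi / 2))).sin).div_const (m * (Real.pi / 2))
    refine h1.congr_deriv ?_
    simp only [id]
    field_simp
  rw [intervalIntegral.integral_eq_sub_of_hasDerivAt (fun x _ => hd x)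
    (Continuous.intervalIntegrable (by fun_prop) _ _)]
  rw [show (m : ℝ) * (Real.pi / 2) * (1 + 1) = m * Real.pi by ring, Real.sin_nat_mul_pi]
  simp

theorem orth (n : ℕ) : ∫ x in (-1:ℝ)..1, Real.cos (kk n * (x + 1)) * Real.cos (kk 0 * (x + 1)) =
    if n = 0 then 1 else 0 := by
  have e : ∀ x : ℝ, Real.cos (kk n * (x + 1)) * Real.cos (kk 0 * (x + 1)) =
      Real.cos (n * (Real.pi / 2) * (x + 1)) / 2 + Real.cos ((n + 2 : ℕ) * (Real.pi / 2) * (x + 1)) / 2 := by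
    intro x
    rw [show (n : ℝ) * (Real.pi / 2) * (x + 1) = kk n * (x + 1) - kk 0 * (x + 1) by unfold kk; push_cast; ring,
      show ((n + 2 : ℕ) : ℝ) * (Real.pi / 2) * (x + 1) = kk n * (x + 1) + kk 0 * (x + 1) by unfold kk; push_cast; ring,
      Real.cos_sub, Real.cos_add]
    ring
  simp_rw [e]
  rw [intervalIntegral.integral_add (Continuous.intervalIntegrable (by fun_prop) _ _)
    (Continuous.intervalIntegrable (by fun_prop) _ _), intervalIntegral.integral_div,
    intervalIntegral.integral_div, int_cos_zero (m := n + 2) (by omega)]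
  by_cases h : n = 0
  · subst h; simp
  · rw [int_cos_zero h]; simp [h]

theorem cos_norm_le (z : ℂ) : ‖Complex.cos z‖ ≤ Real.exp |z.im| := by
  rw [Complex.cos]
  have h1 : ‖Complex.exp (z * Complex.I)‖ ≤ Real.exp |z.im| := by
    rw [Complex.norm_exp]; apply Real.exp_le_exp.2; simp; exact neg_le_abs _
  have h2 : ‖Complex.exp (-z * Complex.I)‖ ≤ Real.exp |z.im| := by
    rw [Complex.norm_exp]; apply Real.exp_le_exp.2; simp; exact le_abs_self _
  rw [norm_div, Complex.norm_two]
  have := norm_add_le (Complex.exp (z * Complex.I)) (Complex.exp (-z * Complex.I))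
  linarith

theorem cos_series_zero {b β : ℕ → ℝ} (hs : Summable (fun n => β n * Real.exp (kk n)))
    (hb : ∀ n, |b n| ≤ β n) {x0 : ℝ}
    (h : ∃ᶠ x in 𝓝[≠] x0, ∑' n, b n * Real.cos (kk n * (x + 1)) = 0) : b 0 = 0 := by
  have hβ : ∀ n, 0 ≤ β n := fun n => (abs_nonneg _).trans (hb n)
  have hsβ : Summable β := by
    refine Summable.of_nonneg_of_le hβ (fun n => ?_) hs
    have : 1 ≤ Real.exp (kk n) := Real.one_le_exp (kk_pos n).le
    nlinarith [hβ n]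
  set H : ℂ → ℂ := fun z => ∑' n, (b n : ℂ) * Complex.cos (kk n * (z + 1)) with hH
  set st : Set ℂ := {z | |z.im| < 1} with hst
  have hop : IsOpen st := isOpen_lt (by fun_prop) continuous_const
  have hpre : IsPreconnected st := by
    have : st = Complex.im ⁻¹' (Ioo (-1) 1) := by ext z; simp [hst, abs_lt]
    rw [this]
    exact ((convex_Ioo (-1:ℝ) 1).is_linear_preimage Complex.imLm.isLinear).isPreconnected
  have hdiff : DifferentiableOn ℂ H st := by
    refine Complex.differentiableOn_tsum_of_summable_norm hs (fun n => ?_) hop (fun n z hz => ?_)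
    · fun_prop
    · rw [norm_mul, Complex.norm_real]
      refine mul_le_mul (hb n) ((cos_norm_le _).trans (Real.exp_le_exp.2 ?_)) (norm_nonneg _) (hβ n)
      have : (((kk n : ℝ) : ℂ) * (z + 1)).im = kk n * z.im := by simp
      rw [this, abs_mul, abs_of_pos (kk_pos n)]
      have hz' : |z.im| < 1 := hz
      nlinarith [kk_pos n]
  have hreal : ∀ x : ℝ, H x = ((∑' n, b n * Real.cos (kk n * (x + 1)) : ℝ) : ℂ) := by
    intro x
    rw [hH, Complex.ofReal_tsum]
    simp
  have hmem : ∀ x : ℝ, (x : ℂ) ∈ st := by intro x; simp [hst]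
  have hfr : ∃ᶠ z in 𝓝[≠] (x0 : ℂ), H z = 0 := by
    have ht : Tendsto (fun x : ℝ => (x : ℂ)) (𝓝[≠] x0) (𝓝[≠] (x0 : ℂ)) := by
      refine tendsto_nhdsWithin_iff.2 ⟨(Complex.continuous_ofReal.tendsto x0).mono_left nhdsWithin_le_nhds, ?_⟩
      filter_upwards [self_mem_nhdsWithin] with x hx
      simpa using hx
    refine ht.frequently (h.mono fun x hx => ?_)
    rw [hreal, hx]; simp
  have hz := (hdiff.analyticOnNhd hop).eqOn_zero_of_preconnected_of_frequently_eq_zero hpre (hmem x0) hfr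
  have hz' : ∀ x : ℝ, ∑' n, b n * Real.cos (kk n * (x + 1)) = 0 := by
    intro x
    have := hz (hmem x)
    rw [hreal] at this
    simpa using this
  have hcb : ∀ n x, |b n * Real.cos (kk n * (x + 1))| ≤ β n := by
    intro n x
    rw [abs_mul]
    have := Real.abs_cos_le_one (kk n * (x + 1))
    nlinarith [hb n, abs_nonneg (b n)]
  have hint := intervalIntegral.hasSum_integral_of_dominated_convergence (μ := volume) (a := -1) (b := 1)
    (F := fun n x => b n * Real.cos (kk n * (x + 1)) * Real.cos (kk 0 * (x + 1)))
    (f := fun x => 0) (fun n _ => β n)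
    (fun n => Continuous.aestronglyMeasurable (by fun_prop))
    (fun n => Eventually.of_forall fun x _ => by
      rw [norm_mul]
      have := Real.abs_cos_le_one (kk 0 * (x + 1))
      have h2 := hcb n x
      simp only [Real.norm_eq_abs]
      nlinarith [abs_nonneg (b n * Real.cos (kk n * (x + 1)))])
    (Eventually.of_forall fun x _ => hsβ) (by simp)
    (Eventually.of_forall fun x _ => by
      have hsum : Summable (fun n => b n * Real.cos (kk n * (x + 1))) :=
        Summable.of_norm_bounded hsβ (fun n => hcb n x)
      have := hsum.hasSum.mul_right (Real.cos (kk 0 * (x + 1)))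
      rwa [hz', zero_mul] at this)
  simp only [intervalIntegral.integral_zero] at hint
  have e : ∀ n, ∫ x in (-1:ℝ)..1, b n * Real.cos (kk n * (x + 1)) * Real.cos (kk 0 * (x + 1)) =
      if n = 0 then b 0 else 0 := by
    intro n
    simp_rw [mul_assoc]
    rw [intervalIntegral.integral_const_mul, orth]
    split_ifs with h
    · simp [h]
    · simp
  simp_rw [e] at hint
  exact (hasSum_ite_eq 0 (b 0)).unique hint

noncomputable def hs (b : ℕ → ℝ) (x : ℝ) : ℝ := ∑' n, b n * Real.cos (kk n * (x + 1))

def Xset (β : ℕ → ℝ) (e : ℝ) : Set (ℕ → ℝ) := (Set.pi univ fun n => Icc (-β n) (β n)) ∩ {b | e ≤ b 0}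

theorem Xset_compact (β : ℕ → ℝ) (e : ℝ) : IsCompact (Xset β e) :=
  (isCompact_univ_pi fun _ => isCompact_Icc).inter_right
    (isClosed_le continuous_const (continuous_apply 0))

theorem hs_cont {β : ℕ → ℝ} (e : ℝ) (hβ : Summable β) (x : ℝ) :
    ContinuousOn (fun b => hs b x) (Xset β e) := by
  refine continuousOn_tsum (u := β) (fun n => ?_) hβ (fun n b hb => ?_)
  · exact ((continuous_apply n).mul continuous_const).continuousOn
  · have h1 : |b n| ≤ β n := abs_le.2 (hb.1 n trivial)
    rw [Real.norm_eq_abs, abs_mul]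
    have := Real.abs_cos_le_one (kk n * (x + 1))
    nlinarith [abs_nonneg (b n)]

theorem hs_lower {β : ℕ → ℝ} {e : ℝ} (he : 0 < e) (hs1 : Summable (fun n => β n * Real.exp (kk n)))
    (hβ : Summable β) {x0 : ℝ} {A : Set ℝ} (hA : A ∈ 𝓝[≠] x0) :
    ∃ F : Finset ℝ, (∀ x ∈ F, x ∈ A) ∧ ∃ c, 0 < c ∧ ∀ b ∈ Xset β e, c ≤ ∑ x ∈ F, |hs b x| := by
  refine (Xset_compact β e).induction_on
    (p := fun s => ∃ F : Finset ℝ, (∀ x ∈ F, x ∈ A) ∧ ∃ c, 0 < c ∧ ∀ b ∈ s, c ≤ ∑ x ∈ F, |hs b x|) ?_ ?_ ?_ ?_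
  · exact ⟨∅, by simp, 1, one_pos, by simp⟩
  · rintro s t hst ⟨F, h1, c, h2, h3⟩
    exact ⟨F, h1, c, h2, fun b hb => h3 b (hst hb)⟩
  · rintro s t ⟨F, h1, c, h2, h3⟩ ⟨F', h1', c', h2', h3'⟩
    classical
    refine ⟨F ∪ F', fun x hx => ?_, min c c', lt_min h2 h2', fun b hb => ?_⟩
    · rcases Finset.mem_union.1 hx with h | h
      · exact h1 x h
      · exact h1' x h
    · rcases hb with h | h
      · exact ((min_le_left _ _).trans (h3 b h)).trans
          (Finset.sum_le_sum_of_subset_of_nonneg Finset.subset_union_left fun _ _ _ => abs_nonneg _)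
      · exact ((min_le_right _ _).trans (h3' b h)).trans
          (Finset.sum_le_sum_of_subset_of_nonneg Finset.subset_union_right fun _ _ _ => abs_nonneg _)
  · intro b hb
    have hex : ∃ x ∈ A, hs b x ≠ 0 := by
      by_contra hcon
      push Not at hcon
      have h0 : b 0 = 0 := by
        refine cos_series_zero hs1 (fun n => abs_le.2 (hb.1 n trivial)) (x0 := x0) ?_
        exact (Eventually.frequently (mem_of_superset hA hcon))
      have : e ≤ b 0 := hb.2
      linarith
    obtain ⟨x, hxA, hx⟩ := hex
    have hc := ((hs_cont e hβ x).abs b hb)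
    have hpos := abs_pos.2 hx
    refine ⟨_, hc.eventually (lt_mem_nhds (half_lt_self hpos)), {x}, by simpa using hxA, _, half_pos hpos, ?_⟩
    intro b' hb'
    simp only [Finset.sum_singleton]
    exact le_of_lt hb'

section
variable {T a : ℝ} {fI : ℝ → ℝ} {pI : ℝ} {f : ℝ → ℝ → ℝ} {p lam : ℝ → ℝ}

theorem w_lam_int (S : Sol T a fI pI f p lam) {t : ℝ} (ht : t ∈ Ioo 0 T)
    (h : ∀ᶠ x in 𝓝[≠] (p t), IntervalIntegrable (fun s => Gd a p x s (t - s) * lam s) volume 0 t) :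
    IntegrableOn (fun s => cn a p 0 s * lam s) (Ioc 0 (t / 2)) := by
  have ht2 : 0 < t / 2 := half_pos ht.1
  obtain ⟨F, hF, c, hc, hlow⟩ := hs_lower (β := fun n => kk n ^ 2 * ee n (t / 2)) (e := ee 0 t) (ee_pos 0 t)
    (by simpa [mul_assoc, mul_comm, mul_left_comm] using summable_master 2 ht2) (summable_kk 2 ht2) h
  have key : ∀ s ∈ Ioc 0 (t / 2), c * cn a p 0 s ≤ ∑ x ∈ F, |Gd a p x s (t - s)| := by
    intro s hs'
    have hw := w_pos S s
    have hτ : t / 2 ≤ t - s := by linarith [hs'.2]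
    have hτ0 : 0 < t - s := by linarith
    have := hlow (fun n => ee n (t - s) * cn a p n s / cn a p 0 s) ⟨fun n _ => ?_, ?_⟩
    · have e : ∀ x, |hs (fun n => ee n (t - s) * cn a p n s / cn a p 0 s) x| = |Gd a p x s (t - s)| / cn a p 0 s := by
        intro x
        have h1 := (Gd_fourier a p hτ0 x s).div_const (cn a p 0 s)
        rw [show |Gd a p x s (t - s)| / cn a p 0 s = |Gd a p x s (t - s) / cn a p 0 s| by
          rw [abs_div, abs_of_pos hw], ← h1.tsum_eq, hs]
        congr 1
        refine tsum_congr fun n => ?_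
        ring
      simp_rw [e] at this
      rw [← Finset.sum_div, le_div_iff₀ hw] at this
      exact this
    · refine abs_le.1 ?_
      simp only
      rw [abs_div, abs_mul, abs_of_pos hw, abs_of_pos (ee_pos _ _), div_le_iff₀ hw]
      have h1 := cn_bd S n s
      have h2 := ee_anti n hτ
      have h3 := ee_pos n (t - s)
      have h4 := (ee_pos n (t / 2)).le
      calc ee n (t - s) * |cn a p n s| ≤ ee n (t / 2) * (kk n ^ 2 * cn a p 0 s) := by gcongr
        _ = _ := by ring
    · change ee 0 t ≤ ee 0 (t - s) * cn a p 0 s / cn a p 0 s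
      rw [mul_div_assoc, div_self hw.ne', mul_one]
      exact ee_anti 0 (by linarith [hs'.1])
  have hi : IntegrableOn (fun s => c⁻¹ * ∑ x ∈ F, |Gd a p x s (t - s) * lam s|) (Ioc 0 (t / 2)) := by
    refine Integrable.const_mul (integrable_finsetSum _ fun x hx => ?_) _
    have := (hF x hx)
    have h2 : IntervalIntegrable (fun s => Gd a p x s (t - s) * lam s) volume 0 t := this
    rw [intervalIntegrable_iff_integrableOn_Ioc_of_le ht.1.le] at h2
    exact (h2.mono_set (Ioc_subset_Ioc_right (by linarith [ht.1]))).abs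
  refine Integrable.mono' hi ((cn_meas S 0).aestronglyMeasurable.mul S.lam_meas.restrict) ?_
  filter_upwards [ae_restrict_mem measurableSet_Ioc] with s hs'
  have h1 := key s hs'
  have h2 := S.lam_nonneg s
  rw [Real.norm_of_nonneg (mul_nonneg (w_pos S s).le h2)]
  simp_rw [abs_mul, abs_of_nonneg h2]
  rw [← Finset.sum_mul, ← mul_assoc]
  refine mul_le_mul_of_nonneg_right ?_ h2
  rw [inv_mul_eq_div, le_div_iff₀ hc]
  linarith
end

open Set Filter Topology MeasureTheory

section
variable {T a : ℝ} {fI : ℝ → ℝ} {pI : ℝ} {f : ℝ → ℝ → ℝ} {p lam : ℝ → ℝ}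

theorem Hm_taylor {x : ℝ} (hx : x ∈ Ioo (-1:ℝ) 1) : ∃ C, 0 ≤ C ∧ ∀ e : ℝ, (e = 1 ∨ e = -1) →
    ∀ r τ, 0 < τ → τ ≤ 1 → r ≤ (1 - |x|) / 2 → ∀ y1 ∈ Icc (-1:ℝ) 1, ∀ y2 ∈ Icc (-1:ℝ) 1, |y1 - e| ≤ r → |y2 - e| ≤ r →
    |Hm x y2 τ - Hm x y1 τ| ≤ 2 * C * r * |y2 - y1| := by
  have hxa : |x| < 1 := abs_lt.2 hx
  obtain ⟨C, hC, hsm⟩ := small0 (ρ := (1 - |x|) / 2) (by linarith) (by linarith [abs_nonneg x])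
  refine ⟨C, hC, fun e he r τ hτ hτ1 hr y1 hy1 y2 hy2 h1 h2 => ?_⟩
  set v : ℝ → ℝ := fun y => -th (x - y) τ + th (x + y + 2) τ with hv
  have hψ : ∀ y, HasDerivAt (fun y => Hm x y τ) (v y) y := by
    intro y
    simp only [Hm_pos hτ]
    have h1 := ((Th_hasDerivAt (x - y) hτ).comp_const_sub x y)
    have h2 := (Th_hasDerivAt (x + y + 2) hτ).comp y (((hasDerivAt_id y).const_add x).add_const 2)
    refine ((h1.add h2).congr_deriv (by simp [hv])).congr_of_eventuallyEq (Eventually.of_forall fun z => ?_)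
    simp
  have hvd : ∀ y, HasDerivAt v (g0 (x - y) τ + g0 (x + y + 2) τ) y := by
    intro y
    simp only [g0, hτ, if_true]
    have h1 := ((th_hasDerivAt (x - y) hτ).comp_const_sub x y).neg
    have h2 := (th_hasDerivAt (x + y + 2) hτ).comp y (((hasDerivAt_id y).const_add x).add_const 2)
    refine ((h1.add h2).congr_deriv (by simp)).congr_of_eventuallyEq (Eventually.of_forall fun z => ?_)
    simp [hv]
  have ve : v e = 0 := by
    rcases he with rfl | rfl
    · simp only [hv]
      rw [show x + 1 + 2 = (x - 1) + 4 by ring, th_add_four]; ring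
    · simp only [hv]
      rw [show x + -1 + 2 = (x - -1) by ring]; ring
  set K : Set ℝ := Icc (-1:ℝ) 1 ∩ Icc (e - r) (e + r) with hK
  have hKc : Convex ℝ K := (convex_Icc _ _).inter (convex_Icc _ _)
  have hr0 : 0 ≤ r := (abs_nonneg _).trans h1
  have heK : e ∈ K := ⟨by rcases he with rfl | rfl <;> simp, by constructor <;> linarith⟩
  have hyK : ∀ y ∈ Icc (-1:ℝ) 1, |y - e| ≤ r → y ∈ K := by
    intro y hy h
    rw [abs_le] at h
    exact ⟨hy, by constructor <;> linarith⟩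
  have hb2 : ∀ y ∈ K, ‖g0 (x - y) τ + g0 (x + y + 2) τ‖ ≤ 2 * C := by
    intro y hy
    have hx1 := le_abs_self x
    have hx2 := neg_le_abs x
    obtain ⟨⟨k1, k2⟩, k3, k4⟩ := hy
    have hbd : ∀ z, (1 - |x|) / 2 ≤ |z| → |z| ≤ 4 - (1 - |x|) / 2 → |g0 z τ| ≤ C := by
      intro z hz1 hz2
      refine ((hsm z hz1 hz2 τ hτ1).2.1).trans ?_
      rw [abs_of_pos hτ]; nlinarith
    have b1 : |g0 (x - y) τ| ≤ C := by
      refine hbd _ ?_ ?_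
      · rcases he with rfl | rfl
        · rw [le_abs]; right; linarith
        · rw [le_abs]; left; linarith
      · rw [abs_le]; constructor <;> linarith
    have b2 : |g0 (x + y + 2) τ| ≤ C := by
      refine hbd _ ?_ ?_
      · rw [le_abs]; left; linarith
      · rw [abs_le]; rcases he with rfl | rfl <;> constructor <;> linarith
    rw [Real.norm_eq_abs]
    exact (abs_add_le _ _).trans (by linarith)
  have hb1 : ∀ y ∈ K, ‖v y‖ ≤ 2 * C * r := by
    intro y hy
    have := hKc.norm_image_sub_le_of_norm_hasDerivWithin_le (fun y _ => (hvd y).hasDerivWithinAt) hb2 heK hy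
    rw [ve, sub_zero] at this
    refine this.trans ?_
    have : ‖y - e‖ ≤ r := by
      rw [Real.norm_eq_abs, abs_le]; constructor <;> linarith [hy.2.1, hy.2.2]
    gcongr
  exact hKc.norm_image_sub_le_of_norm_hasDerivWithin_le (fun y _ => (hψ y).hasDerivWithinAt) hb1
    (hyK y1 hy1 h1) (hyK y2 hy2 h2)

theorem Hd_w_bd (S : Sol T a fI pI f p lam) {x : ℝ} (hx : x ∈ Ioo (-1:ℝ) 1) :
    ∃ C, 0 ≤ C ∧ ∀ s τ, 0 < τ → τ ≤ 1 → |Hd a p x s τ| ≤ C * cn a p 0 s := by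
  have hxa : |x| < 1 := abs_lt.2 hx
  obtain ⟨C, hC, hT⟩ := Hm_taylor hx
  set m := min a ((1 - |x|) / 4) with hm
  have hm0 : 0 < m := lt_min S.a_mem.1 (by linarith)
  refine ⟨4 * C + 1 / (2 * m ^ 2), by positivity, fun s τ hτ hτ1 => ?_⟩
  have hw := w_ge S s
  have hap := abar_pos S s
  have hl := yl_mem S s
  have hrr := yr_mem S s
  rcases le_or_gt m (abar a p s) with h | h
  · have h1 := Hd_bd (a := a) (p := p) hτ ⟨hx.1.le, hx.2.le⟩ s
    refine h1.trans ?_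
    have h2 : m ^ 2 ≤ abar a p s ^ 2 := by gcongr
    have h3 : 1 ≤ 1 / (2 * m ^ 2) * cn a p 0 s := by
      rw [one_div_mul_eq_div, le_div_iff₀ (by positivity)]; linarith
    have := w_pos S s
    nlinarith [mul_nonneg hC this.le]
  · have hma : m ≤ a := min_le_left _ _
    have hmx : m ≤ (1 - |x|) / 4 := min_le_right _ _
    have hfin : |Hd a p x s τ| ≤ 2 * C * (2 * abar a p s) * (2 * abar a p s) := by
      have e2 : |yl a p s - yr a p s| = 2 * abar a p s := by
        unfold yl yr
        rw [show p s - abar a p s - (p s + abar a p s) = -(2 * abar a p s) by ring, abs_neg, abs_of_pos (by linarith)]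
      unfold Hd
      nth_rewrite 2 [← e2]
      have hcase : abar a p s = 1 - p s ∨ abar a p s = 1 + p s := by
        unfold abar at h ⊢
        rcases min_choice a (min (1 - p s) (1 + p s)) with h' | h'
        · rw [h'] at h; linarith
        · rw [h']; exact min_choice _ _
      rcases hcase with h' | h'
      · refine hT 1 (Or.inl rfl) _ τ hτ hτ1 (by linarith) _ ⟨hrr.1.le, hrr.2⟩ _ ⟨hl.1, hl.2.le⟩ ?_ ?_ <;>
        · simp only [yl, yr]; rw [abs_le]; constructor <;> linarith
      · refine hT (-1) (Or.inr rfl) _ τ hτ hτ1 (by linarith) _ ⟨hrr.1.le, hrr.2⟩ _ ⟨hl.1, hl.2.le⟩ ?_ ?_ <;>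
        · simp only [yl, yr]; rw [abs_le]; constructor <;> linarith
    refine hfin.trans ?_
    have h4 : 0 ≤ 1 / (2 * m ^ 2) * cn a p 0 s := mul_nonneg (by positivity) (w_pos S s).le
    nlinarith
end

open Set Filter Topology MeasureTheory

section
variable {T a : ℝ} {fI : ℝ → ℝ} {pI : ℝ} {f : ℝ → ℝ → ℝ} {p lam : ℝ → ℝ}

theorem F_lim (S : Sol T a fI pI f p lam) {t1 : ℝ} (ht1 : t1 ∈ Ioo 0 T)
    (hw : IntegrableOn (fun s => cn a p 0 s * lam s) (Ioc 0 (t1 / 2))) {x : ℝ} (hx : x ∈ Ioo (-1:ℝ) 1) :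
    Tendsto (fun t => ∫ z in (-1:ℝ)..x, f z t) (𝓝[>] 0) (𝓝 (∫ z in (-1:ℝ)..x, fI z)) := by
  have hx' : x ∈ Icc (-1:ℝ) 1 := ⟨hx.1.le, hx.2.le⟩
  obtain ⟨C, hC, hCb⟩ := Hd_w_bd S hx
  have h10 : 0 < t1 / 2 := half_pos ht1.1
  have hform : ∀ t ∈ Ioo 0 (min (t1 / 2) 1), ∫ z in (-1:ℝ)..x, f z t =
      U fI x t + ∫ s in (0:ℝ)..t, Hd a p x s (t - s) * lam s := by
    intro t ht
    have ht2 : t < t1 / 2 := ht.2.trans_le (min_le_left _ _)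
    have htT : t < T := by linarith [ht1.2, ht1.1]
    obtain ⟨B, hB, hBb⟩ := Gd_w_bd S (half_pos ht.1)
    refine F_formula S ⟨ht.1, htT⟩ (D := fun s => 2 * B * (cn a p 0 s * lam s) +
      (Ioc (t / 2) t).indicator (fun s => 2 * lam s) s) ?_ ?_ hx'
    · refine Integrable.add ((hw.mono_set (Ioc_subset_Ioc_right ht2.le)).const_mul _) ?_
      refine Integrable.integrableOn ?_
      rw [integrable_indicator_iff measurableSet_Ioc]
      exact (S.lam_loc (t / 2) t (half_pos ht.1) htT).const_mul 2
    · intro s hs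
      have hl := S.lam_nonneg s
      have hwp := w_pos S s
      rcases le_or_gt s (t / 2) with h | h
      · have h1 : ∫ z in (-1:ℝ)..1, |Gd a p z s (t - s)| ≤ ∫ z in (-1:ℝ)..1, B * cn a p 0 s := by
          refine intervalIntegral.integral_mono_on (by norm_num)
            ((Gd_contx a p s _).abs.intervalIntegrable _ _) (by simp) (fun z _ => ?_)
          exact hBb z s (t - s) (by linarith)
        have h2 : s ∉ Ioc (t / 2) t := fun hh => by linarith [hh.1]
        simp only [indicator_of_notMem h2, add_zero]
        rw [intervalIntegral.integral_const, smul_eq_mul] at h1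
        calc _ ≤ ((1 - -1) * (B * cn a p 0 s)) * lam s := mul_le_mul_of_nonneg_right h1 hl
          _ = _ := by ring
      · have h2 : s ∈ Ioc (t / 2) t := ⟨h, hs.2.le⟩
        simp only [indicator_of_mem h2]
        have := mul_le_mul_of_nonneg_right (Gd_L1 a p (τ := t - s) (by linarith [hs.2]) s) hl
        have : 0 ≤ 2 * B * (cn a p 0 s * lam s) := by positivity
        linarith
  have hdiff : Tendsto (fun t => (∫ z in (-1:ℝ)..x, f z t) - U fI x t) (𝓝[>] 0) (𝓝 0) := by
    refine squeeze_zero_norm' (a := fun t => C * ∫ s in (0:ℝ)..t, cn a p 0 s * lam s) ?_ ?_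
    · filter_upwards [Ioo_mem_nhdsGT (lt_min h10 one_pos)] with t ht
      rw [hform t ht, add_sub_cancel_left, ← intervalIntegral.integral_const_mul]
      refine intervalIntegral.norm_integral_le_of_norm_le ht.1.le ?_ ?_
      · have hne : ∀ᵐ s : ℝ, s ≠ t := by
          exact (measure_eq_zero_iff_ae_notMem.1 (measure_singleton t)).mono fun s hs => by simpa using hs
        filter_upwards [hne] with s hs1 hs2
        have hlt : s < t := lt_of_le_of_ne hs2.2 hs1
        have ht1' := ht.2.trans_le (min_le_right _ _)
        rw [norm_mul, Real.norm_of_nonneg (S.lam_nonneg s), Real.norm_eq_abs, ← mul_assoc]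
        exact mul_le_mul_of_nonneg_right (hCb s (t - s) (by linarith) (by linarith [hs2.1])) (S.lam_nonneg s)
      · rw [intervalIntegrable_iff_integrableOn_Ioc_of_le ht.1.le]
        exact (hw.mono_set (Ioc_subset_Ioc_right (ht.2.trans_le (min_le_left _ _)).le)).const_mul _
    · simpa using (prim_tendsto h10 hw).const_mul C
  have := hdiff.add (U_tendsto S.cI hx')
  simpa using this

theorem f_ii (S : Sol T a fI pI f p lam) {t : ℝ} (ht : t ∈ Ioo 0 T) {u v : ℝ} (hu : u ∈ Icc (-1:ℝ) 1)
    (hv : v ∈ Icc (-1:ℝ) 1) : IntervalIntegrable (fun z => f z t) volume u v :=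
  (IntegrableOn.mono_set (S.fint t ht) (ordConnected_Icc.uIcc_subset hu hv)).intervalIntegrable

theorem p_gt (S : Sol T a fI pI f p lam) {t1 : ℝ} (ht1 : t1 ∈ Ioo 0 T)
    (hw : IntegrableOn (fun s => cn a p 0 s * lam s) (Ioc 0 (t1 / 2))) :
    ∃ x1, -1 < x1 ∧ ∀ᶠ t in 𝓝[>] 0, x1 < p t := by
  obtain ⟨x2, h21, h22⟩ := exists_between S.pI_mem.1
  obtain ⟨x1, h11, h12⟩ := exists_between h21
  have hp1 := S.pI_mem.2
  refine ⟨x1, h11, ?_⟩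
  have l1 := F_lim S ht1 hw (x := x1) ⟨h11, by linarith⟩
  have l2 := F_lim S ht1 hw (x := x2) ⟨h21, by linarith⟩
  have hlt : ∫ z in (-1:ℝ)..x1, fI z < ∫ z in (-1:ℝ)..x2, fI z := by
    have : 0 < ∫ z in x1..x2, fI z := by
      refine intervalIntegral.intervalIntegral_pos_of_pos_on (S.cI.intervalIntegrable _ _) (fun z hz => ?_) h12
      exact S.posI z ⟨by linarith [hz.1], by linarith [hz.2]⟩
    have e := intervalIntegral.integral_add_adjacent_intervals (a := -1) (b := x1) (c := x2) (μ := volume)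
      (S.cI.intervalIntegrable _ _) (S.cI.intervalIntegrable _ _)
    linarith
  have hT : ∀ᶠ t in 𝓝[>] (0:ℝ), t ∈ Ioo 0 T := Ioo_mem_nhdsGT (ht1.1.trans ht1.2)
  filter_upwards [l1.eventually_lt l2 hlt, hT] with t hlt' ht
  by_contra hcon
  push Not at hcon
  have : ∫ z in x1..x2, f z t ≤ 0 := by
    have h0 := intervalIntegral.integral_mono_on h12.le (f_ii S ht (u := x1) (v := x2) ⟨by linarith, by linarith⟩
      ⟨by linarith, by linarith⟩) (g := fun _ => (0:ℝ)) (by simp) (fun z hz => by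
        rcases eq_or_lt_of_le (hcon.trans hz.1) with h | h
        · rw [← h, S.zero t ht]
        · exact (S.neg t ht z ⟨h, by linarith [hz.2]⟩).le)
    simpa using h0
  have e := intervalIntegral.integral_add_adjacent_intervals (a := -1) (b := x1) (c := x2) (μ := volume)
    (f_ii S ht (by simp) ⟨by linarith, by linarith⟩)
    (f_ii S ht ⟨by linarith, by linarith⟩ ⟨by linarith, by linarith⟩)
  linarith

theorem p_lt (S : Sol T a fI pI f p lam) {t1 : ℝ} (ht1 : t1 ∈ Ioo 0 T)
    (hw : IntegrableOn (fun s => cn a p 0 s * lam s) (Ioc 0 (t1 / 2))) :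
    ∃ x1, x1 < 1 ∧ ∀ᶠ t in 𝓝[>] 0, p t < x1 := by
  obtain ⟨x1, h11, h12⟩ := exists_between S.pI_mem.2
  obtain ⟨x2, h21, h22⟩ := exists_between h12
  have hp1 := S.pI_mem.1
  refine ⟨x2, h22, ?_⟩
  have l1 := F_lim S ht1 hw (x := x1) ⟨by linarith, by linarith⟩
  have l2 := F_lim S ht1 hw (x := x2) ⟨by linarith, by linarith⟩
  have hlt : ∫ z in (-1:ℝ)..x2, fI z < ∫ z in (-1:ℝ)..x1, fI z := by
    have : 0 < ∫ z in x1..x2, - fI z := by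
      refine intervalIntegral.intervalIntegral_pos_of_pos_on (S.cI.neg.intervalIntegrable _ _) (fun z hz => ?_) h21
      have := S.negI z ⟨by linarith [hz.1], by linarith [hz.2]⟩
      linarith
    rw [intervalIntegral.integral_neg] at this
    have e := intervalIntegral.integral_add_adjacent_intervals (a := -1) (b := x1) (c := x2) (μ := volume)
      (S.cI.intervalIntegrable _ _) (S.cI.intervalIntegrable _ _)
    linarith
  have hT : ∀ᶠ t in 𝓝[>] (0:ℝ), t ∈ Ioo 0 T := Ioo_mem_nhdsGT (ht1.1.trans ht1.2)
  filter_upwards [l2.eventually_lt l1 hlt, hT] with t hlt' ht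
  by_contra hcon
  push Not at hcon
  have : 0 ≤ ∫ z in x1..x2, f z t := by
    have h0 := intervalIntegral.integral_mono_on h21.le (f := fun _ => (0:ℝ)) (by simp)
      (f_ii S ht (u := x1) (v := x2) ⟨by linarith, by linarith⟩
      ⟨by linarith, by linarith⟩) (fun z hz => by
        rcases eq_or_lt_of_le (hz.2.trans hcon) with h | h
        · rw [h, S.zero t ht]
        · exact (S.pos t ht z ⟨by linarith [hz.1], h⟩).le)
    simpa using h0
  have e := intervalIntegral.integral_add_adjacent_intervals (a := -1) (b := x1) (c := x2) (μ := volume)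
    (f_ii S ht (by simp) ⟨by linarith, by linarith⟩)
    (f_ii S ht ⟨by linarith, by linarith⟩ ⟨by linarith, by linarith⟩)
  linarith

theorem hL_alpha (S : Sol T a fI pI f p lam) {t1 : ℝ} (ht1 : t1 ∈ Ioo 0 T)
    (h : ∀ᶠ x in 𝓝[≠] (p t1), IntervalIntegrable (fun s => Gd a p x s (t1 - s) * lam s) volume 0 t1) :
    ∀ t, t < T → IntegrableOn lam (Ioc 0 t) := by
  have hw := w_lam_int S ht1 h
  obtain ⟨x1, hx1, e1⟩ := p_gt S ht1 hw
  obtain ⟨x2, hx2, e2⟩ := p_lt S ht1 hw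
  have h10 : 0 < t1 / 2 := half_pos ht1.1
  obtain ⟨d, hd, hd'⟩ := (mem_nhdsGT_iff_exists_Ioo_subset' h10).1
    ((e1.and e2).and (Ioo_mem_nhdsGT h10))
  have hd0 : 0 < d := hd
  set c := min a (min (1 - x2) (1 + x1)) with hc
  have hc0 : 0 < c := lt_min S.a_mem.1 (lt_min (by linarith) (by linarith))
  have hi : IntegrableOn lam (Ioc 0 (d / 2)) := by
    have hsub : Ioc 0 (d / 2) ⊆ Ioc 0 (t1 / 2) := by
      intro s hs
      have := hd' (show s ∈ Ioo 0 d from ⟨hs.1, by linarith [hs.2]⟩)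
      exact ⟨hs.1, this.2.2.le⟩
    refine Integrable.mono' ((hw.mono_set hsub).const_mul (1 / (2 * c ^ 2))) S.lam_meas.restrict ?_
    filter_upwards [ae_restrict_mem measurableSet_Ioc] with s hs
    have hh := hd' (show s ∈ Ioo 0 d from ⟨hs.1, by linarith [hs.2]⟩)
    have p1 : x1 < p s := hh.1.1
    have p2 : p s < x2 := hh.1.2
    have hca : c ≤ abar a p s := by
      unfold abar
      exact min_le_min le_rfl (min_le_min (by linarith) (by linarith))
    have h2 : c ^ 2 ≤ abar a p s ^ 2 := by gcongr
    have h3 := w_ge S s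
    have h4 : 1 ≤ 1 / (2 * c ^ 2) * cn a p 0 s := by
      rw [one_div_mul_eq_div, le_div_iff₀ (by positivity)]; linarith
    rw [Real.norm_of_nonneg (S.lam_nonneg s), ← mul_assoc]
    nlinarith [S.lam_nonneg s]
  intro t ht
  have := hi.union (S.lam_loc (d / 2) t (half_pos hd0) ht)
  refine this.mono_set fun s hs => ?_
  rcases le_or_gt s (d / 2) with h | h
  · exact Or.inl ⟨hs.1, h⟩
  · exact Or.inr ⟨h, hs.2⟩

theorem hL_all (S : Sol T a fI pI f p lam) {f' : ℝ → ℝ}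
    (hd : ∀ x ∈ Ioo (-1:ℝ) 1, HasDerivAt fI (f' x) x)
    (hf' : ContinuousOn f' (Icc (-1:ℝ) 1)) :
    ∀ t, t < T → IntegrableOn lam (Ioc 0 t) := by
  by_cases h : ∀ t ∈ Ioo 0 T, ∃ᶠ x in 𝓝[≠] (p t),
      ¬ IntervalIntegrable (fun s => Gd a p x s (t - s) * lam s) volume 0 t
  · exact hL_beta S hd hf' h
  · push Not at h
    obtain ⟨t1, ht1, h1⟩ := h
    exact hL_alpha S ht1 h1
end

open Set Filter Topology MeasureTheory

theorem ext_eq (fI : ℝ → ℝ) {x : ℝ} (hx : x ∈ Icc (-1:ℝ) 1) :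
    IccExtend (show (-1:ℝ) ≤ 1 by norm_num) (fun z : Icc (-1:ℝ) 1 => fI z) x = fI x := by
  rw [IccExtend_of_mem _ _ hx]

theorem deriv_nonpos_of_sign {g : ℝ → ℝ} {q d : ℝ} (hq : q < 1) (h0 : g q = 0)
    (hn : ∀ x ∈ Ioc q 1, g x < 0) (hd : HasDerivAt g d q) : d ≤ 0 := by
  have h1 : HasDerivWithinAt g d (Ioi q) q := hd.hasDerivWithinAt
  rw [hasDerivWithinAt_iff_tendsto_slope' (by simp)] at h1
  refine le_of_tendsto h1 ?_
  filter_upwards [Ioo_mem_nhdsGT hq] with x hx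
  rw [slope_def_field, h0, sub_zero]
  exact div_nonpos_of_nonpos_of_nonneg (hn x ⟨hx.1, hx.2.le⟩).le (by linarith [hx.1])

theorem mkSol (T a a₀ lamI : ℝ) (fI : ℝ → ℝ) (pI : ℝ)
    (f : ℝ → ℝ → ℝ) (p : ℝ → ℝ)
    (ha : a ∈ Set.Ioo (0:ℝ) 1)
    (hI : IsInitialDatum fI pI a₀ lamI)
    (hsol : IsSolutionP a fI (Set.Ioo 0 T) f p)
    (hint : ∀ t ∈ Set.Ioo (0:ℝ) T,
      MeasureTheory.IntegrableOn (fun x => f x t) (Set.Icc (-1:ℝ) 1)) :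
    Sol T a (IccExtend (show (-1:ℝ) ≤ 1 by norm_num) (fun z : Icc (-1:ℝ) 1 => fI z)) pI f
      ((Ioo 0 T).indicator p) ((Ioo 0 T).indicator (flux f p)) where
  a_mem := ha
  cI := (continuousOn_iff_continuous_domRestrict.1 hI.smooth.continuousOn).Icc_extend'
  pI_mem := hI.pI_mem
  posI := fun x hx => by
    rw [ext_eq fI ⟨hx.1, hx.2.le.trans hI.pI_mem.2.le⟩]; exact hI.pos_left x hx
  negI := fun x hx => by
    rw [ext_eq fI ⟨hI.pI_mem.1.le.trans hx.1.le, hx.2⟩]; exact hI.neg_right x hx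
  p_cont := hsol.p_cont.congr fun t ht => indicator_of_mem ht _
  p_meas := by
    classical
    rw [← piecewise_eq_indicator]
    exact hsol.p_cont.measurable_piecewise continuousOn_const measurableSet_Ioo
  p_mem := fun t => by
    by_cases ht : t ∈ Ioo 0 T
    · rw [indicator_of_mem ht]; exact hsol.p_mem t ht
    · rw [indicator_of_notMem ht]; norm_num
  zero := fun t ht => by rw [indicator_of_mem ht]; exact hsol.zero_at t ht
  pos := fun t ht x hx => by rw [indicator_of_mem ht] at hx; exact hsol.pos_left t ht x hx
  neg := fun t ht x hx => by rw [indicator_of_mem ht] at hx; exact hsol.neg_right t ht x hx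
  diff := fun t ht => by
    rw [indicator_of_mem ht, indicator_of_mem ht, flux, neg_neg]
    exact (hsol.diff_at t ht).hasDerivAt
  lam_nonneg := fun t => by
    refine indicator_nonneg (fun t ht => ?_) t
    have := deriv_nonpos_of_sign (hsol.p_mem t ht).2 (hsol.zero_at t ht) (hsol.neg_right t ht)
      (hsol.diff_at t ht).hasDerivAt
    unfold flux
    linarith
  lam_meas := by
    rw [aestronglyMeasurable_indicator_iff measurableSet_Ioo]
    exact hsol.flux_loc_int.aestronglyMeasurable
  lam_loc := fun s t hs ht => by
    have hsub : Icc s t ⊆ Ioo 0 T := fun z hz => ⟨hs.trans_le hz.1, hz.2.trans_lt ht⟩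
    have := hsol.flux_loc_int.integrableOn_compact_subset hsub isCompact_Icc
    refine (this.congr_fun (fun z hz => ?_) measurableSet_Icc).mono_set Ioc_subset_Icc_self
    rw [indicator_of_mem (hsub hz)]
  duh := fun t ht x hx => by
    rw [hsol.duhamel t ht x hx]
    congr 1
    · refine intervalIntegral.integral_congr fun y hy => ?_
      rw [uIcc_of_le (by norm_num)] at hy
      rw [ext_eq fI hy, heatGamma_Gm ht.1]
    · refine intervalIntegral.integral_congr_ae ?_
      have hne : ∀ᵐ s : ℝ, s ≠ t :=
        (measure_eq_zero_iff_ae_notMem.1 (measure_singleton t)).mono fun s hs => by simpa using hs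
      filter_upwards [hne] with s hs1 hs2
      rw [uIoc_of_le ht.1.le] at hs2
      have hlt : s < t := lt_of_le_of_ne hs2.2 hs1
      have hs : s ∈ Ioo 0 T := ⟨hs2.1, hlt.trans ht.2⟩
      simp only [Gd, yl, yr, abar]
      rw [indicator_of_mem hs, indicator_of_mem hs, heatGamma_Gm (by linarith), heatGamma_Gm (by linarith)]
  fint := hint

theorem main_thm (T a a₀ lamI : ℝ) (fI : ℝ → ℝ) (pI : ℝ)
    (f : ℝ → ℝ → ℝ) (p : ℝ → ℝ)
    (ha : a ∈ Set.Ioo (0:ℝ) 1)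
    (hI : IsInitialDatum fI pI a₀ lamI)
    (hsol : IsSolutionP a fI (Set.Ioo 0 T) f p)
    (hint : ∀ t ∈ Set.Ioo (0:ℝ) T,
      MeasureTheory.IntegrableOn (fun x => f x t) (Set.Icc (-1:ℝ) 1)) :
    ∀ t ∈ Set.Ioo (0:ℝ) T,
      (∫ x in (-1:ℝ)..(p t), f x t) = (∫ x in (-1:ℝ)..pI, fI x) ∧
      (∫ x in (p t)..1, f x t) = (∫ x in pI..1, fI x) := by
  intro t ht
  have S := mkSol T a a₀ lamI fI pI f p ha hI hsol hint
  have hL := hL_all S (f' := derivWithin fI (Icc (-1:ℝ) 1)) (fun x hx => by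
      have hm : Icc (-1:ℝ) 1 ∈ 𝓝 x := Icc_mem_nhds hx.1 hx.2
      have h1 : HasDerivWithinAt fI (derivWithin fI (Icc (-1:ℝ) 1) x) (Icc (-1:ℝ) 1) x :=
        ((hI.smooth.differentiableOn (by norm_num)) x ⟨hx.1.le, hx.2.le⟩).hasDerivWithinAt
      refine (h1.hasDerivAt hm).congr_of_eventuallyEq ?_
      filter_upwards [hm] with z hz
      exact ext_eq fI hz)
    (hI.smooth.continuousOn_derivWithin (uniqueDiffOn_Icc (by norm_num)) (by norm_num))
  have e1 := final S hL ht
  have e2 := final2 S hL ht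
  rw [indicator_of_mem ht] at e1 e2
  have hp := hI.pI_mem
  constructor
  · rw [e1]
    refine intervalIntegral.integral_congr fun y hy => ?_
    rw [uIcc_of_le hp.1.le] at hy
    exact ext_eq fI ⟨hy.1, hy.2.trans hp.2.le⟩
  · rw [e2]
    refine intervalIntegral.integral_congr fun y hy => ?_
    rw [uIcc_of_le hp.2.le] at hy
    exact ext_eq fI ⟨hp.1.le.trans hy.1, hy.2⟩


end helpers

/-- Conservation of the buyer and vendor masses: for all `t ∈ (0,T)`,
`∫_{−1}^{p(t)} f(x,t) dx = ∫_{−1}^{p_I} f_I(x) dx` and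
`∫_{p(t)}^{1} f(x,t) dx = ∫_{p_I}^{1} f_I(x) dx`. -/
theorem statement19 (T a a₀ lamI : ℝ) (fI : ℝ → ℝ) (pI : ℝ)
    (f : ℝ → ℝ → ℝ) (p : ℝ → ℝ)
    (ha : a ∈ Set.Ioo (0:ℝ) 1) (ha₀ : 0 < a₀) (ha₀' : a₀ < a / 4)
    (hI : IsInitialDatum fI pI a₀ lamI)
    (hsol : IsSolutionP a fI (Set.Ioo 0 T) f p)
    (hint : ∀ t ∈ Set.Ioo (0:ℝ) T,
      MeasureTheory.IntegrableOn (fun x => f x t) (Set.Icc (-1:ℝ) 1)) :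
    ∀ t ∈ Set.Ioo (0:ℝ) T,
      (∫ x in (-1:ℝ)..(p t), f x t) = (∫ x in (-1:ℝ)..pI, fI x) ∧
      (∫ x in (p t)..1, f x t) = (∫ x in pI..1, fI x) := by
  exact main_thm T a a₀ lamI fI pI f p ha hI hsol hint
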